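/- Let Λ ⊂ V and decompose H = H_in ⊕ H_out, where H_in is spanned by the simplices with all vertices in Λ, so that the Gauss–Bonnet operator decomposes in block form D = [[D_in, C],[C*, D_out]] with D_in, D_out the restrictions to H_in, H_out and C the coupling operator. Assume: (1) the restricted complex S_n|_Λ is globally χ-complete (hence D_in is essentially self-adjoint); (2) D_out is essentially self-adjoint on its finitely supported domain; (3) C extends to a compact (in particular bounded) operator. Then the global operator D is essentially self-adjoint on ⊕_{i=0}^n C_c^i(V). -/

import Mathlib

/-!
Write `P` and `Q` for the projections onto `H_in` and `H_out`. A bounded coupling `C = P D Q` has,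
by duality, a bounded formal adjoint `Q D P`. On the maximal domain of `D` the two diagonal blocks
of `D u` are therefore again square summable, and when `P u` and `Q u` are approximated in the
graph norms of `D_in` and `D_out`, the off-diagonal blocks converge by boundedness alone.

The inner block is treated by Gaffney's cut-off argument, with the minimum over the vertices of a
simplex in place of the average: appending a vertex `y` to a simplex `x` changes the minimum by at
most `|χ (x 0) - χ y|`. The completeness bound for the averages controls these differences. In even
degree they are combinations of the gradients of the averages at two orderings of the simplex; in
odd degree the bound for large plateaus already controls the total weight of the cofaces. Hence the
commutators of `d` and `δ` with the cut-offs tend to zero by dominated convergence.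
-/

open Filter Function Set
open scoped Topology

namespace DiscreteHodge

/-- A weighted graph `G = (V, m₀, m₁)`: a strictly positive vertex weight `m₀`, a symmetric
nonnegative edge weight `m₁`; `x, y` are neighbors iff `m₁ x y > 0`; `G` is locally finite. -/
structure WG (V : Type*) where
  m₀ : V → ℝ
  m₁ : V → V → ℝ
  m₀_pos : ∀ x, 0 < m₀ x
  m₁_nonneg : ∀ x y, 0 ≤ m₁ x y
  m₁_symm : ∀ x y, m₁ x y = m₁ y x
  locFin : ∀ x, {y | 0 < m₁ x y}.Finite

variable {V : Type*}

/-- Adjacency in a weighted graph. -/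
def WG.Adj (G : WG V) (x y : V) : Prop := 0 < G.m₁ x y

/-- A tuple of vertices is a simplex of the clique complex iff its vertices are pairwise
distinct and pairwise adjacent (span a complete subgraph). -/
def IsSimplex (G : WG V) {k : ℕ} (x : Fin k → V) : Prop :=
  Function.Injective x ∧ ∀ a b : Fin k, a ≠ b → G.Adj (x a) (x b)

/-- The family of simplex weights `(m_i)` of the weighted oriented clique `n`-simplicial
complex over `G`: `m i` is defined on `(i+1)`-tuples, extends `m₀, m₁`, is strictly positive
exactly on simplices (for `1 ≤ i ≤ n`) and is invariant under permutations of its arguments. -/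
structure CliqueWeights (G : WG V) (n : ℕ) where
  m : ∀ i : ℕ, (Fin (i + 1) → V) → ℝ
  nonneg : ∀ i x, 0 ≤ m i x
  m_zero : ∀ x : Fin 1 → V, m 0 x = G.m₀ (x 0)
  m_one : ∀ x : Fin 2 → V, m 1 x = G.m₁ (x 0) (x 1)
  pos_iff : ∀ i, 1 ≤ i → i ≤ n → ∀ x : Fin (i + 1) → V, (0 < m i x ↔ IsSimplex G x)
  perm_inv : ∀ i, 1 ≤ i → i ≤ n → ∀ (x : Fin (i + 1) → V) (σ : Equiv.Perm (Fin (i + 1))),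
      m i (x ∘ σ) = m i x

/-- An alternating function on tuples. -/
def IsAlternating {k : ℕ} (f : (Fin k → V) → ℂ) : Prop :=
  ∀ (x : Fin k → V) (σ : Equiv.Perm (Fin k)),
    f (x ∘ σ) = ((Equiv.Perm.sign σ : ℤ) : ℂ) * f x

/-- An `i`-cochain: an alternating function on `(i+1)`-tuples supported on oriented
`i`-simplices.  Elements of `C_c^i(V)` are cochains with finite support. -/
def IsCochain (G : WG V) (i : ℕ) (f : (Fin (i + 1) → V) → ℂ) : Prop :=
  IsAlternating f ∧ ∀ x, ¬ IsSimplex G x → f x = 0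

/-- Coboundary operator on the part of the complex lying over `Λ ⊆ V`:
`d_i f(x₁,…,x_{i+1}) = Σ_j (−1)^{j+1} f(x₁,…,x̂_j,…,x_{i+1})` on simplices with all
vertices in `Λ`, and `0` elsewhere. -/
noncomputable def dOn (G : WG V) (Λ : Set V) (i : ℕ) (f : (Fin (i + 1) → V) → ℂ) :
    (Fin (i + 2) → V) → ℂ :=
  Set.indicator {x | IsSimplex G x ∧ ∀ j, x j ∈ Λ}
    (fun x => ∑ j : Fin (i + 2), (-1 : ℂ) ^ (j : ℕ) * f (x ∘ j.succAbove))

/-- The coboundary operator `d_{i+1} : C_c^i(V) → C_c^{i+1}(V)` (paper index `i+1`). -/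
noncomputable def d (G : WG V) (i : ℕ) (f : (Fin (i + 1) → V) → ℂ) :
    (Fin (i + 2) → V) → ℂ :=
  dOn G Set.univ i f

/-- Codifferential on the part of the complex lying over `Λ ⊆ V`:
`δ g(x₁,…,x_{i+1}) = (1/m_i(x)) Σ_{y ∈ F(x) ∩ Λ} m_{i+1}(x,y) g(x,y)`; vertices outside the
common-neighbor set `F(x)` contribute `0` since `m_{i+1}` vanishes on non-simplices. -/
noncomputable def deltaOn (G : WG V) {n : ℕ} (W : CliqueWeights G n) (Λ : Set V) (i : ℕ)
    (g : (Fin (i + 2) → V) → ℂ) : (Fin (i + 1) → V) → ℂ :=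
  fun x => ((W.m i x : ℝ) : ℂ)⁻¹ *
    ∑' y : V, Set.indicator Λ
      (fun y => ((W.m (i + 1) (Fin.snoc x y) : ℝ) : ℂ) * g (Fin.snoc x y)) y

/-- The codifferential `δ_{i+1} : C_c^{i+1}(V) → C_c^i(V)` (paper index `i+1`). -/
noncomputable def delta (G : WG V) {n : ℕ} (W : CliqueWeights G n) (i : ℕ)
    (g : (Fin (i + 2) → V) → ℂ) : (Fin (i + 1) → V) → ℂ :=
  deltaOn G W Set.univ i g

/-- Squared `ℓ²(m_i)` norm: `‖f‖² = (1/(i+1)!) Σ_σ m_i(σ) |f(σ)|²`. -/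
noncomputable def norm2 {G : WG V} {n : ℕ} (W : CliqueWeights G n) (i : ℕ)
    (f : (Fin (i + 1) → V) → ℂ) : ℝ :=
  ((Nat.factorial (i + 1) : ℝ))⁻¹ * ∑' x : Fin (i + 1) → V, W.m i x * ‖f x‖ ^ 2

/-- Membership in `ℓ²(m_i)`. -/
def MemL2 {G : WG V} {n : ℕ} (W : CliqueWeights G n) (i : ℕ)
    (f : (Fin (i + 1) → V) → ℂ) : Prop :=
  Summable (fun x : Fin (i + 1) → V => W.m i x * ‖f x‖ ^ 2)

/-- The `ℓ²(m_i)` inner product `⟨f,g⟩ = (1/(i+1)!) Σ_σ m_i(σ) f(σ) conj (g σ)`. -/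
noncomputable def inner2 {G : WG V} {n : ℕ} (W : CliqueWeights G n) (i : ℕ)
    (f g : (Fin (i + 1) → V) → ℂ) : ℂ :=
  ((Nat.factorial (i + 1) : ℂ))⁻¹ *
    ∑' x : Fin (i + 1) → V, ((W.m i x : ℝ) : ℂ) * f x * (starRingEnd ℂ) (g x)

/-- Convergence `u k → f` in `ℓ²(m_i)`. -/
def TendstoL2 {G : WG V} {n : ℕ} (W : CliqueWeights G n) (i : ℕ)
    (u : ℕ → (Fin (i + 1) → V) → ℂ) (f : (Fin (i + 1) → V) → ℂ) : Prop :=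
  Tendsto (fun k => norm2 W i (fun x => u k x - f x)) atTop (𝓝 0)

/-- The Gauss–Bonnet operator `D = d + δ` acting componentwise on cochain families:
`(DF)_i = d_i f_{i-1} + δ_{i+1} f_{i+1}` with the end terms absent. -/
noncomputable def Dop (G : WG V) {n : ℕ} (W : CliqueWeights G n)
    (f : ∀ i : ℕ, (Fin (i + 1) → V) → ℂ) : ∀ i : ℕ, (Fin (i + 1) → V) → ℂ
  | 0 => delta G W 0 (f 1)
  | (i + 1) =>
      if i + 1 ≤ n then (fun x => d G i (f i) x + delta G W (i + 1) (f (i + 2)) x) else 0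

/-- The Laplacian block `L_i = δ_{i+1} d_{i+1} + d_i δ_i` on `C_c^i(V)`
(the `d_iδ_i` term absent for `i = 0`, the `δ_{i+1}d_{i+1}` term absent for `i = n`). -/
noncomputable def Lblock (G : WG V) {n : ℕ} (W : CliqueWeights G n) :
    ∀ i : ℕ, ((Fin (i + 1) → V) → ℂ) → (Fin (i + 1) → V) → ℂ
  | 0 => fun g => if 1 ≤ n then delta G W 0 (d G 0 g) else 0
  | (i + 1) => fun g x =>
      (if i + 2 ≤ n then delta G W (i + 1) (d G (i + 1) g) x else 0)
        + d G i (delta G W i g) x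

/-- A family `(f_0, …, f_n)` of cochains, one in each degree (encoded with `f i = 0`
for `i > n`). -/
def CochainFamily (G : WG V) (n : ℕ) (u : ∀ i : ℕ, (Fin (i + 1) → V) → ℂ) : Prop :=
  (∀ i, IsCochain G i (u i)) ∧ ∀ i, n < i → u i = 0

/-- All components finitely supported, i.e. membership in `⊕_{i=0}^n C_c^i(V)`. -/
def FinSuppFamily (u : ∀ i : ℕ, (Fin (i + 1) → V) → ℂ) : Prop :=
  ∀ i, (Function.support (u i)).Finite

/-- Membership in `H = ⊕_{i=0}^n ℓ²(m_i)`. -/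
def MemL2Family {G : WG V} {n : ℕ} (W : CliqueWeights G n)
    (u : ∀ i : ℕ, (Fin (i + 1) → V) → ℂ) : Prop :=
  ∀ i, MemL2 W i (u i)

/-- Componentwise `ℓ²` convergence of cochain families, i.e. convergence in `H`. -/
def TendstoL2Family {G : WG V} {n : ℕ} (W : CliqueWeights G n)
    (u : ℕ → ∀ i : ℕ, (Fin (i + 1) → V) → ℂ)
    (f : ∀ i : ℕ, (Fin (i + 1) → V) → ℂ) : Prop :=
  ∀ i, TendstoL2 W i (fun k => u k i) (f i)

/-- Extension of a vertex function to tuples by averaging: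
`χ̃(x_0,…,x_{k-1}) = (1/k) Σ_j χ(x_j)`. -/
noncomputable def avg (χ : V → ℝ) {k : ℕ} (x : Fin k → V) : ℂ :=
  (k : ℂ)⁻¹ * ∑ j : Fin k, (χ (x j) : ℂ)

/-- The discrete gradient energy of a vertex function `χ` at a `j`-simplex `x` (relative to
the region `Λ`): `(1/m_j(x)) Σ_{y ∈ F(x) ∩ Λ} m_{j+1}(x,y) |d_{j+1} χ̃ (x,y)|²`. -/
noncomputable def gradEnergyOn {G : WG V} {n : ℕ} (W : CliqueWeights G n) (Λ : Set V)
    (j : ℕ) (χ : V → ℝ) (x : Fin (j + 1) → V) : ℝ :=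
  (W.m j x)⁻¹ * ∑' y : V, Set.indicator Λ
    (fun y => W.m (j + 1) (Fin.snoc x y) *
      ‖dOn G Λ j (fun σ : Fin (j + 1) → V => avg χ σ) (Fin.snoc x y)‖ ^ 2) y

/-- `(O, χ)` is a system of plateau cut-offs witnessing global `χ`-completeness of the part
of the complex lying over `Λ`: `(O k)` is an increasing exhaustion of `Λ` by finite sets,
the `χ k` are finitely supported vertex functions whose averages equal `1` on every simplex
with all vertices in `O k`, with a uniform discrete-gradient energy bound in all degrees. -/
def IsChiWitnessOn {G : WG V} {n : ℕ} (W : CliqueWeights G n) (Λ : Set V)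
    (O : ℕ → Set V) (χ : ℕ → V → ℝ) : Prop :=
  (∀ k, (O k).Finite) ∧ Monotone O ∧ (∀ k, O k ⊆ Λ) ∧ (⋃ k, O k) = Λ ∧
  (∀ k, (Function.support (χ k)).Finite) ∧
  (∀ k (i : ℕ), i ≤ n → ∀ x : Fin (i + 1) → V, IsSimplex G x → (∀ j, x j ∈ Λ) →
      (∀ j, x j ∈ O k) → avg (χ k) x = 1) ∧
  ∃ C > 0, ∀ k (j : ℕ), j + 1 ≤ n → ∀ x : Fin (j + 1) → V,
      IsSimplex G x → (∀ a, x a ∈ Λ) → gradEnergyOn W Λ j (χ k) x ≤ C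

/-- Global `χ`-completeness of the restriction of the complex to `Λ`. -/
def GloballyChiCompleteOn {G : WG V} {n : ℕ} (W : CliqueWeights G n) (Λ : Set V) : Prop :=
  ∃ O χ, IsChiWitnessOn W Λ O χ

/-- Global `χ`-completeness of the weighted clique `n`-simplicial complex. -/
def GloballyChiComplete {G : WG V} {n : ℕ} (W : CliqueWeights G n) : Prop :=
  GloballyChiCompleteOn W Set.univ

/-- `(O, χ)` witnesses local `χ`-completeness at level `ℓ`: cut-offs are required only on
`ℓ`-simplices, and the energy bound only in degree `ℓ`. -/
def IsChiWitnessAtLevel {G : WG V} {n : ℕ} (W : CliqueWeights G n) (ℓ : ℕ)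
    (O : ℕ → Set V) (χ : ℕ → V → ℝ) : Prop :=
  (∀ k, (O k).Finite) ∧ Monotone O ∧ (⋃ k, O k) = Set.univ ∧
  (∀ k, (Function.support (χ k)).Finite) ∧
  (∀ k (x : Fin (ℓ + 1) → V), IsSimplex G x → (∀ j, x j ∈ O k) → avg (χ k) x = 1) ∧
  ∃ C > 0, ∀ k (j : ℕ), j + 1 = ℓ → ∀ x : Fin (j + 1) → V,
      IsSimplex G x → gradEnergyOn W Set.univ j (χ k) x ≤ C

/-- Local `χ`-completeness at level `ℓ`. -/
def LocallyChiCompleteAtLevel {G : WG V} {n : ℕ} (W : CliqueWeights G n) (ℓ : ℕ) : Prop :=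
  ∃ O χ, IsChiWitnessAtLevel W ℓ O χ

/-- Essential self-adjointness of the Gauss–Bonnet operator `D = d + δ`, phrased as
`D_min = D_max`: every `u` in the maximal domain (i.e. `u ∈ H` with the pointwise-defined
`Du ∈ H`) is approximated, in the graph norm of `D`, by finitely supported cochain
families (elements of `⊕_{i=0}^n C_c^i(V)`). -/
def ESA_D {G : WG V} {n : ℕ} (W : CliqueWeights G n) : Prop :=
  ∀ u : ∀ i : ℕ, (Fin (i + 1) → V) → ℂ,
    CochainFamily G n u → MemL2Family W u → MemL2Family W (Dop G W u) →
    ∃ uk : ℕ → ∀ i : ℕ, (Fin (i + 1) → V) → ℂ,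
      (∀ k, CochainFamily G n (uk k) ∧ FinSuppFamily (uk k)) ∧
      TendstoL2Family W uk u ∧
      TendstoL2Family W (fun k => Dop G W (uk k)) (Dop G W u)

/-- Essential self-adjointness of the Hodge Laplacian `L = D²`, phrased as `L_min = L_max`
via graph-norm approximation from `⊕_{i=0}^n C_c^i(V)`. -/
def ESA_L {G : WG V} {n : ℕ} (W : CliqueWeights G n) : Prop :=
  ∀ u : ∀ i : ℕ, (Fin (i + 1) → V) → ℂ,
    CochainFamily G n u → MemL2Family W u → MemL2Family W (Dop G W (Dop G W u)) →
    ∃ uk : ℕ → ∀ i : ℕ, (Fin (i + 1) → V) → ℂ,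
      (∀ k, CochainFamily G n (uk k) ∧ FinSuppFamily (uk k)) ∧
      TendstoL2Family W uk u ∧
      TendstoL2Family W (fun k => Dop G W (Dop G W (uk k))) (Dop G W (Dop G W u))

/-- Orthogonal projection of `H` onto `H_in`, the subspace spanned by simplices with all
vertices in `Λ`. -/
noncomputable def projIn {V : Type*} (Λ : Set V) (u : ∀ i : ℕ, (Fin (i + 1) → V) → ℂ) :
    ∀ i : ℕ, (Fin (i + 1) → V) → ℂ :=
  fun i => Set.indicator {x | ∀ j, x j ∈ Λ} (u i)

/-- Orthogonal projection of `H` onto `H_out = H_in^⊥`, spanned by simplices with at least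
one vertex outside `Λ`. -/
noncomputable def projOut {V : Type*} (Λ : Set V) (u : ∀ i : ℕ, (Fin (i + 1) → V) → ℂ) :
    ∀ i : ℕ, (Fin (i + 1) → V) → ℂ :=
  fun i x => u i x - projIn Λ u i x

/-- The diagonal block `D_in = P D P` of the Gauss–Bonnet operator. -/
noncomputable def Din {V : Type*} (G : WG V) {n : ℕ} (W : CliqueWeights G n) (Λ : Set V)
    (u : ∀ i : ℕ, (Fin (i + 1) → V) → ℂ) : ∀ i : ℕ, (Fin (i + 1) → V) → ℂ :=
  projIn Λ (Dop G W (projIn Λ u))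

/-- The diagonal block `D_out = Q D Q` of the Gauss–Bonnet operator. -/
noncomputable def Dout {V : Type*} (G : WG V) {n : ℕ} (W : CliqueWeights G n) (Λ : Set V)
    (u : ∀ i : ℕ, (Fin (i + 1) → V) → ℂ) : ∀ i : ℕ, (Fin (i + 1) → V) → ℂ :=
  projOut Λ (Dop G W (projOut Λ u))

/-- The coupling operator `C = P D Q` between `Λ` and `V \ Λ`. -/
noncomputable def Coup {V : Type*} (G : WG V) {n : ℕ} (W : CliqueWeights G n) (Λ : Set V)
    (u : ∀ i : ℕ, (Fin (i + 1) → V) → ℂ) : ∀ i : ℕ, (Fin (i + 1) → V) → ℂ :=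
  projIn Λ (Dop G W (projOut Λ u))

/-- The squared norm of `H = ⊕_{i=0}^n ℓ²(m_i)`. -/
noncomputable def normH {V : Type*} {G : WG V} {n : ℕ} (W : CliqueWeights G n)
    (u : ∀ i : ℕ, (Fin (i + 1) → V) → ℂ) : ℝ :=
  ∑ i ∈ Finset.range (n + 1), norm2 W i (u i)

open scoped ENNReal

/-! ### Series in `[0, ∞]` -/

theorem ennreal_tsum_sq_le_tsum_mul_tsum {T : Type*} {r f g : T → ℝ≥0∞}
    (h : ∀ x, r x ^ 2 ≤ f x * g x) : (∑' x, r x) ^ 2 ≤ (∑' x, f x) * ∑' x, g x := by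
  have hr : ∀ x, r x ≤ f x ^ (2⁻¹ : ℝ) * g x ^ (2⁻¹ : ℝ) := fun x => by
    rw [← ENNReal.mul_rpow_of_nonneg _ _ (by norm_num), ENNReal.le_rpow_inv_iff (by norm_num)]
    exact_mod_cast h x
  have hroot : ∑' x, r x ≤ ((∑' x, f x) * ∑' x, g x) ^ (2⁻¹ : ℝ) := by
    rw [ENNReal.tsum_eq_iSup_sum]
    refine iSup_le fun s => (Finset.sum_le_sum fun x _ => hr x).trans ?_
    refine (ENNReal.inner_le_Lp_mul_Lq s _ _ Real.HolderConjugate.two_two).trans ?_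
    simp only [ENNReal.mul_rpow_of_nonneg _ _ (inv_nonneg.2 zero_le_two), ← ENNReal.rpow_mul,
      one_div, inv_mul_cancel₀ (two_ne_zero (α := ℝ)), ENNReal.rpow_one]
    gcongr <;> exact ENNReal.sum_le_tsum s
  rw [ENNReal.le_rpow_inv_iff two_pos] at hroot
  exact_mod_cast hroot

theorem ennreal_sum_sq_le_card_mul_sum_sq {ι : Type*} [Fintype ι] (a : ι → ℝ≥0∞) :
    (∑ j, a j) ^ 2 ≤ Fintype.card ι * ∑ j, a j ^ 2 := by
  simpa [tsum_fintype] using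
    ennreal_tsum_sq_le_tsum_mul_tsum (r := a) (f := 1) (g := fun j => a j ^ 2) (by simp)

theorem ennreal_add_sq_le (a b : ℝ≥0∞) : (a + b) ^ 2 ≤ 2 * (a ^ 2 + b ^ 2) := by
  simpa using ennreal_sum_sq_le_card_mul_sum_sq ![a, b]

theorem tendsto_ennreal_tsum_zero_of_dominated {T : Type*} {a : ℕ → T → ℝ≥0∞} {b : T → ℝ≥0∞}
    (hb : ∑' x, b x ≠ ⊤) (hab : ∀ k x, a k x ≤ b x) (h0 : ∀ x, ∀ᶠ k in atTop, a k x = 0) :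
    Tendsto (fun k => ∑' x, a k x) atTop (𝓝 0) := by
  let : MeasurableSpace T := ⊤
  simp only [← MeasureTheory.lintegral_count] at hb ⊢
  simpa using MeasureTheory.tendsto_lintegral_of_dominated_convergence b
    (fun k => measurable_from_top) (fun k => .of_forall (hab k)) hb
    (.of_forall fun x => tendsto_const_nhds.congr' ((h0 x).mono fun k hk => hk.symm))

theorem tendsto_ennreal_zero_of_le_mul {a b : ℕ → ℝ≥0∞} {c : ℝ≥0∞} (hc : c ≠ ⊤)
    (hb : Tendsto b atTop (𝓝 0)) (h : ∀ k, a k ≤ c * b k) : Tendsto a atTop (𝓝 0) := by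
  have hcb : Tendsto (fun k => c * b k) atTop (𝓝 0) := by
    simpa using ENNReal.Tendsto.const_mul hb (.inr hc)
  exact tendsto_of_tendsto_of_tendsto_of_le_of_le tendsto_const_nhds hcb (fun _ => zero_le) h

/-! ### Permutations of tuples -/

theorem IsSimplex.comp_injective {G : WG V} {k l : ℕ} {x : Fin k → V} (hx : IsSimplex G x)
    {e : Fin l → Fin k} (he : Injective e) : IsSimplex G (x ∘ e) :=
  ⟨hx.1.comp he, fun _ _ hab => hx.2 _ _ (he.ne hab)⟩

theorem isSimplex_comp_perm {G : WG V} {k : ℕ} {x : Fin k → V} (σ : Equiv.Perm (Fin k)) :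
    IsSimplex G (x ∘ σ) ↔ IsSimplex G x :=
  ⟨fun h => by simpa [comp_assoc] using h.comp_injective σ.symm.injective,
    fun h => h.comp_injective σ.injective⟩

theorem isSimplex_one (G : WG V) (x : Fin 1 → V) : IsSimplex G x :=
  ⟨injective_of_subsingleton x, fun a b hab => absurd (Subsingleton.elim a b) hab⟩

theorem snoc_comp_perm {k : ℕ} (σ : Equiv.Perm (Fin k)) (x : Fin k → V) (y : V) :
    ∃ τ : Equiv.Perm (Fin (k + 1)),
      (Fin.snoc (x ∘ σ) y : Fin (k + 1) → V) = (Fin.snoc x y : Fin (k + 1) → V) ∘ τ ∧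
      Equiv.Perm.sign τ = Equiv.Perm.sign σ := by
  refine ⟨(finSuccEquivLast.trans (Equiv.optionCongr σ)).trans finSuccEquivLast.symm,
    funext fun a => ?_, ?_⟩
  · refine Fin.lastCases ?_ (fun b => ?_) a <;> simp
  · rw [Equiv.Perm.sign_trans_trans_symm, Equiv.optionCongr_sign]

theorem perm_comp_succAbove {k : ℕ} (σ : Equiv.Perm (Fin (k + 1))) (p : Fin (k + 1)) :
    ∃ τ : Equiv.Perm (Fin k), σ ∘ p.succAbove = (σ p).succAbove ∘ τ ∧
      (-1 : ℂ) ^ (p : ℕ) * ((Equiv.Perm.sign τ : ℤ) : ℂ)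
        = ((Equiv.Perm.sign σ : ℤ) : ℂ) * (-1) ^ ((σ p : Fin (k + 1)) : ℕ) := by
  -- Conjugating by cycles that bring `p` and `σ p` to position `0` gives a permutation fixing `0`.
  set ρ : Equiv.Perm (Fin (k + 1)) := (σ p).cycleRange * σ * p.cycleRange.symm with hρ
  have hρ0 : ρ 0 = 0 := by simp [hρ]
  obtain ⟨⟨q, τ⟩, hτ⟩ := Equiv.Perm.decomposeFin.symm.surjective ρ
  obtain rfl : q = 0 := by
    rw [← hρ0, ← hτ, Equiv.Perm.decomposeFin_symm_apply_zero]
  refine ⟨τ, funext fun j => ?_, ?_⟩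
  · have hsucc := Equiv.Perm.decomposeFin_symm_apply_succ τ 0 j
    rw [hτ] at hsucc
    simp only [hρ, Equiv.Perm.coe_mul, comp_apply, Fin.cycleRange_symm_succ,
      Equiv.swap_self, Equiv.refl_apply] at hsucc
    simpa using congrArg (σ p).cycleRange.symm hsucc
  · have hsign : Equiv.Perm.sign τ = Equiv.Perm.sign ρ := by
      simpa [hτ] using (Equiv.Perm.decomposeFin.symm_sign 0 τ).symm
    have hsq : ((-1 : ℂ) ^ (p : ℕ)) * (-1) ^ (p : ℕ) = 1 := by simp [← mul_pow]
    simp only [hsign, hρ, Equiv.Perm.sign_mul, Equiv.Perm.sign_symm, Fin.sign_cycleRange]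
    push_cast
    linear_combination ((-1 : ℂ) ^ ((σ p : Fin (k + 1)) : ℕ) * ((Equiv.Perm.sign σ : ℤ) : ℂ)) * hsq

/-- Splitting a `(k+1)`-tuple into its face opposite to position `p` and its vertex there. -/
def faceEquiv {k : ℕ} (p : Fin (k + 1)) : (Fin k → V) × V ≃ (Fin (k + 1) → V) :=
  (Equiv.prodComm _ _).trans (Fin.insertNthEquiv (fun _ => V) p)

theorem faceEquiv_comp_succAbove {k : ℕ} (p : Fin (k + 1)) (z : (Fin k → V) × V) :
    faceEquiv p z ∘ p.succAbove = z.1 :=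
  funext fun j => by simp [faceEquiv]

theorem faceEquiv_eq_snoc_comp_perm {k : ℕ} (p : Fin (k + 1)) (z : (Fin k → V) × V) :
    ∃ σ : Equiv.Perm (Fin (k + 1)),
      faceEquiv p z = (Fin.snoc z.1 z.2 : Fin (k + 1) → V) ∘ σ ∧
      ((Equiv.Perm.sign σ : ℤ) : ℂ) = (-1) ^ (p : ℕ) * (-1) ^ k := by
  refine ⟨(Fin.last k).cycleRange.symm * p.cycleRange, ?_, ?_⟩
  · change (p.insertNth z.2 z.1 : Fin (k + 1) → V) = _
    rw [← Fin.insertNth_last', Equiv.Perm.coe_mul, ← comp_assoc,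
      Fin.insertNth_comp_cycleRange_symm, Fin.cons_comp_cycleRange]
  · simp [Equiv.Perm.sign_mul, Equiv.Perm.sign_symm, Fin.sign_cycleRange, mul_comm]

namespace CliqueWeights

variable {G : WG V} {n i : ℕ} (W : CliqueWeights G n)

theorem m_pos_iff (hi : i ≤ n) (x : Fin (i + 1) → V) : 0 < W.m i x ↔ IsSimplex G x := by
  rcases i with _ | i
  · simp [W.m_zero, G.m₀_pos, isSimplex_one G x]
  · exact W.pos_iff _ i.succ_pos hi x

theorem m_eq_zero (hi : i ≤ n) {x : Fin (i + 1) → V} (hx : ¬ IsSimplex G x) : W.m i x = 0 :=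
  (W.nonneg i x).antisymm' (not_lt.1 (mt (W.m_pos_iff hi x).1 hx))

theorem m_comp_perm (hi : i ≤ n) (x : Fin (i + 1) → V) (σ : Equiv.Perm (Fin (i + 1))) :
    W.m i (x ∘ σ) = W.m i x := by
  rcases i with _ | i
  · rw [show x ∘ σ = x from funext fun a => congrArg x (Subsingleton.elim (α := Fin 1) _ _)]
  · exact W.perm_inv _ i.succ_pos hi x σ

theorem finite_m_snoc_ne_zero (hi : i + 1 ≤ n) (x : Fin (i + 1) → V) :
    {y | W.m (i + 1) (Fin.snoc x y) ≠ 0}.Finite := by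
  refine (G.locFin (x 0)).subset fun y hy => ?_
  have hadj := ((W.m_pos_iff hi _).1 ((W.nonneg _ _).lt_of_ne' hy)).2 (Fin.castSucc 0)
    (Fin.last _) (Fin.castSucc_lt_last 0).ne
  rwa [Fin.snoc_castSucc (α := fun _ => V), Fin.snoc_last] at hadj

end CliqueWeights

/-! ### Cochains, coboundary and codifferential -/

/-- The tuples over `Λ`, so that `projIn Λ u i` and `projOut Λ u i` are the restrictions of `u i`
to this set and to its complement. -/
def tuplesIn (Λ : Set V) (k : ℕ) : Set (Fin k → V) := {x | ∀ j, x j ∈ Λ}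

theorem projOut_eq_indicator_compl (Λ : Set V) (u : ∀ i : ℕ, (Fin (i + 1) → V) → ℂ) (i : ℕ) :
    projOut Λ u i = (tuplesIn Λ (i + 1))ᶜ.indicator (u i) :=
  (Set.indicator_compl _ _).symm

theorem comp_perm_mem_tuplesIn {Λ : Set V} {k : ℕ} (σ : Equiv.Perm (Fin k)) {x : Fin k → V} :
    x ∘ σ ∈ tuplesIn Λ k ↔ x ∈ tuplesIn Λ k :=
  σ.forall_congr_left.trans (by simp [tuplesIn])

theorem snoc_mem_tuplesIn {Λ : Set V} {k : ℕ} {x : Fin k → V} {y : V} :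
    (Fin.snoc x y : Fin (k + 1) → V) ∈ tuplesIn Λ (k + 1) ↔ x ∈ tuplesIn Λ k ∧ y ∈ Λ := by
  simp [tuplesIn, Fin.forall_fin_succ']

theorem finite_tuplesIn {A : Set V} (hA : A.Finite) (k : ℕ) : (tuplesIn A k).Finite :=
  Set.Finite.pi' fun _ => hA

theorem finite_support_indicator {k : ℕ} {f : (Fin k → V) → ℂ} (hf : f.support.Finite)
    (S : Set (Fin k → V)) : (S.indicator f).support.Finite := by
  rw [support_indicator]
  exact hf.inter_of_right S

namespace IsCochain

variable {G : WG V} {i : ℕ} {f g : (Fin (i + 1) → V) → ℂ}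

theorem zero : IsCochain G i 0 := ⟨fun _ _ => by simp, fun _ _ => rfl⟩

theorem add (hf : IsCochain G i f) (hg : IsCochain G i g) : IsCochain G i (f + g) :=
  ⟨fun x σ => by simp [hf.1 x σ, hg.1 x σ, mul_add], fun x hx => by simp [hf.2 x hx, hg.2 x hx]⟩

theorem sub (hf : IsCochain G i f) (hg : IsCochain G i g) : IsCochain G i (f - g) :=
  ⟨fun x σ => by simp [hf.1 x σ, hg.1 x σ, mul_sub], fun x hx => by simp [hf.2 x hx, hg.2 x hx]⟩

theorem mul_of_invariant (hf : IsCochain G i f) {c : (Fin (i + 1) → V) → ℂ}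
    (hc : ∀ x (σ : Equiv.Perm (Fin (i + 1))), c (x ∘ σ) = c x) : IsCochain G i (c * f) :=
  ⟨fun x σ => by simp [hf.1 x σ, hc, mul_left_comm], fun x hx => by simp [hf.2 x hx]⟩

theorem indicator (hf : IsCochain G i f) {S : Set (Fin (i + 1) → V)}
    (hS : ∀ x (σ : Equiv.Perm (Fin (i + 1))), x ∘ σ ∈ S ↔ x ∈ S) :
    IsCochain G i (S.indicator f) := by
  classical
  exact ⟨fun x σ => by simp [Set.indicator_apply, hS, hf.1 x σ],
    fun x hx => by simp [Set.indicator_apply, hf.2 x hx]⟩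

theorem indicator_tuplesIn (hf : IsCochain G i f) (Λ : Set V) :
    IsCochain G i ((tuplesIn Λ (i + 1)).indicator f) :=
  hf.indicator fun _ σ => comp_perm_mem_tuplesIn σ

theorem indicator_compl_tuplesIn (hf : IsCochain G i f) (Λ : Set V) :
    IsCochain G i ((tuplesIn Λ (i + 1))ᶜ.indicator f) :=
  hf.indicator fun _ σ => (comp_perm_mem_tuplesIn σ).not

end IsCochain

theorem d_apply (G : WG V) {i : ℕ} (f : (Fin (i + 1) → V) → ℂ) {x : Fin (i + 2) → V}
    (hx : IsSimplex G x) :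
    d G i f x = ∑ j : Fin (i + 2), (-1 : ℂ) ^ (j : ℕ) * f (x ∘ j.succAbove) := by
  simp [d, dOn, hx]

theorem d_apply_of_not_isSimplex (G : WG V) {i : ℕ} (f : (Fin (i + 1) → V) → ℂ)
    {x : Fin (i + 2) → V} (hx : ¬ IsSimplex G x) : d G i f x = 0 := by
  simp [d, dOn, hx]

theorem IsCochain.d {G : WG V} {i : ℕ} {f : (Fin (i + 1) → V) → ℂ} (hf : IsCochain G i f) :
    IsCochain G (i + 1) (d G i f) := by
  refine ⟨fun x σ => ?_, fun x hx => d_apply_of_not_isSimplex G f hx⟩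
  by_cases hx : IsSimplex G x
  · rw [d_apply G f hx, d_apply G f ((isSimplex_comp_perm σ).2 hx), Finset.mul_sum,
      ← Equiv.sum_comp σ (fun p => ((Equiv.Perm.sign σ : ℤ) : ℂ) *
        ((-1) ^ (p : ℕ) * f (x ∘ p.succAbove)))]
    refine Finset.sum_congr rfl fun p _ => ?_
    obtain ⟨τ, hτ, hsign⟩ := perm_comp_succAbove σ p
    rw [comp_assoc, hτ, ← comp_assoc, hf.1, ← mul_assoc, hsign, mul_assoc]
  · rw [d_apply_of_not_isSimplex G f hx,
      d_apply_of_not_isSimplex G f (mt (isSimplex_comp_perm σ).1 hx), mul_zero]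

theorem d_add (G : WG V) (i : ℕ) (f g : (Fin (i + 1) → V) → ℂ) :
    d G i (f + g) = d G i f + d G i g := by
  funext x
  by_cases hx : IsSimplex G x
  · simp [d_apply, hx, mul_add, Finset.sum_add_distrib]
  · simp [d_apply_of_not_isSimplex, hx]

section codifferential

variable {G : WG V} {n i : ℕ} (W : CliqueWeights G n)

theorem delta_apply (g : (Fin (i + 2) → V) → ℂ) (x : Fin (i + 1) → V) :
    delta G W i g x =
      (W.m i x : ℂ)⁻¹ * ∑' y, (W.m (i + 1) (Fin.snoc x y) : ℂ) * g (Fin.snoc x y) := by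
  simp [delta, deltaOn]

theorem summable_delta (hi : i + 1 ≤ n) (g : (Fin (i + 2) → V) → ℂ) (x : Fin (i + 1) → V) :
    Summable fun y => (W.m (i + 1) (Fin.snoc x y) : ℂ) * g (Fin.snoc x y) :=
  summable_of_hasFiniteSupport <| (W.finite_m_snoc_ne_zero hi x).subset fun y hy h =>
    hy (by simp [h])

theorem delta_zero (i : ℕ) : delta G W i 0 = 0 := by
  funext x
  simp [delta_apply]

theorem delta_add (hi : i + 1 ≤ n) (f g : (Fin (i + 2) → V) → ℂ) :
    delta G W i (f + g) = delta G W i f + delta G W i g := by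
  funext x
  simp only [delta_apply, Pi.add_apply, mul_add,
    (summable_delta W hi f x).tsum_add (summable_delta W hi g x)]

theorem IsCochain.delta (hi : i + 1 ≤ n) {g : (Fin (i + 2) → V) → ℂ}
    (hg : IsCochain G (i + 1) g) : IsCochain G i (delta G W i g) := by
  refine ⟨fun x σ => ?_, fun x hx => ?_⟩
  · have hterm : ∀ y, (W.m (i + 1) (Fin.snoc (x ∘ σ) y) : ℂ) * g (Fin.snoc (x ∘ σ) y) =
        ((Equiv.Perm.sign σ : ℤ) : ℂ) *
          ((W.m (i + 1) (Fin.snoc x y) : ℂ) * g (Fin.snoc x y)) := fun y => by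
      obtain ⟨τ, hτ, hsign⟩ := snoc_comp_perm σ x y
      rw [hτ, W.m_comp_perm hi, hg.1, hsign, mul_left_comm]
    simp only [delta_apply, W.m_comp_perm (i.le_succ.trans hi), hterm, tsum_mul_left]
    ring
  · have hz : ∀ y, g (Fin.snoc x y) = 0 := fun y => hg.2 _ fun hy => hx <| by
      have hface := hy.comp_injective (Fin.castSucc_injective _)
      simpa [comp_def] using hface
    simp [delta_apply, hz]

end codifferential

/-! ### Energies -/

/-- The squared `ℓ²(m_i)` norm with values in `[0, ∞]`; it is infinite exactly off `ℓ²(m_i)`, where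
`norm2` takes the junk value `0`. -/
noncomputable def energy {G : WG V} {n : ℕ} (W : CliqueWeights G n) (i : ℕ)
    (f : (Fin (i + 1) → V) → ℂ) : ℝ≥0∞ :=
  ((Nat.factorial (i + 1) : ℕ) : ℝ≥0∞)⁻¹ * ∑' x, ENNReal.ofReal (W.m i x) * ‖f x‖ₑ ^ 2

/-- Convergence in `ℓ²(m_i)` expressed by energies. Unlike `TendstoL2` it forces the differences
to be eventually in `ℓ²(m_i)`. -/
def EnergyTendsto {G : WG V} {n : ℕ} (W : CliqueWeights G n) (i : ℕ)
    (u : ℕ → (Fin (i + 1) → V) → ℂ) (f : (Fin (i + 1) → V) → ℂ) : Prop :=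
  Tendsto (fun k => energy W i (u k - f)) atTop (𝓝 0)

theorem enorm_complex_ofReal (a : ℝ) : ‖(a : ℂ)‖ₑ = ‖a‖ₑ := by
  rw [← ofReal_norm, Complex.norm_real, ofReal_norm]

section energy

variable {G : WG V} {n i : ℕ} (W : CliqueWeights G n)

theorem inv_factorial_ne_top (i : ℕ) : ((Nat.factorial i : ℕ) : ℝ≥0∞)⁻¹ ≠ ⊤ :=
  ENNReal.inv_ne_top.2 (by exact_mod_cast i.factorial_ne_zero)

theorem inv_factorial_ne_zero (i : ℕ) : ((Nat.factorial i : ℕ) : ℝ≥0∞)⁻¹ ≠ 0 :=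
  ENNReal.inv_ne_zero.2 (ENNReal.natCast_ne_top _)

theorem energy_ne_top_iff {f : (Fin (i + 1) → V) → ℂ} :
    energy W i f ≠ ⊤ ↔ ∑' x, ENNReal.ofReal (W.m i x) * ‖f x‖ₑ ^ 2 ≠ ⊤ := by
  rw [energy, Ne, ENNReal.mul_eq_top]
  simp only [inv_factorial_ne_zero, inv_factorial_ne_top, ne_eq, not_false_eq_true, true_and,
    false_and, or_false]

theorem toReal_energy (f : (Fin (i + 1) → V) → ℂ) : (energy W i f).toReal = norm2 W i f := by
  rw [energy, norm2, ENNReal.toReal_mul, ENNReal.tsum_toReal_eq fun x => by finiteness]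
  simp [W.nonneg]

theorem memL2_iff_energy_ne_top {f : (Fin (i + 1) → V) → ℂ} :
    MemL2 W i f ↔ energy W i f ≠ ⊤ := by
  have hterm : ∀ x, ENNReal.ofReal (W.m i x * ‖f x‖ ^ 2) =
      ENNReal.ofReal (W.m i x) * ‖f x‖ₑ ^ 2 := fun x => by
    rw [ENNReal.ofReal_mul (W.nonneg _ _), ENNReal.ofReal_pow (norm_nonneg _), ofReal_norm]
  simp only [energy_ne_top_iff, ← hterm]
  refine ⟨fun h => Summable.tsum_ofReal_ne_top h, fun h => ?_⟩
  refine (ENNReal.summable_toReal h).congr fun x => ?_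
  exact ENNReal.toReal_ofReal (mul_nonneg (W.nonneg _ _) (by positivity))

theorem energy_zero (i : ℕ) : energy W i 0 = 0 := by simp [energy]

theorem energy_mono {f g : (Fin (i + 1) → V) → ℂ} (h : ∀ x, ‖f x‖ₑ ≤ ‖g x‖ₑ) :
    energy W i f ≤ energy W i g := by
  unfold energy
  gcongr with x
  exact h x

theorem energy_indicator_le (S : Set (Fin (i + 1) → V)) (f : (Fin (i + 1) → V) → ℂ) :
    energy W i (S.indicator f) ≤ energy W i f :=
  energy_mono W fun _ => enorm_indicator_le_enorm_self ..

theorem energy_neg (f : (Fin (i + 1) → V) → ℂ) : energy W i (-f) = energy W i f := by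
  simp [energy]

theorem energy_add_le (f g : (Fin (i + 1) → V) → ℂ) :
    energy W i (f + g) ≤ 2 * (energy W i f + energy W i g) := by
  rw [energy, energy, energy, ← mul_add, ← ENNReal.tsum_add, mul_left_comm,
    ← ENNReal.tsum_mul_left (a := 2)]
  refine mul_le_mul_right (ENNReal.tsum_le_tsum fun x => ?_) _
  calc ENNReal.ofReal (W.m i x) * ‖f x + g x‖ₑ ^ 2
      ≤ ENNReal.ofReal (W.m i x) * (2 * (‖f x‖ₑ ^ 2 + ‖g x‖ₑ ^ 2)) := by
        gcongr
        exact (pow_le_pow_left' (enorm_add_le _ _) 2).trans (ennreal_add_sq_le _ _)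
    _ = 2 * (ENNReal.ofReal (W.m i x) * ‖f x‖ₑ ^ 2 +
          ENNReal.ofReal (W.m i x) * ‖g x‖ₑ ^ 2) := by ring

theorem energy_sub_ne_top {f g : (Fin (i + 1) → V) → ℂ} (hf : energy W i f ≠ ⊤)
    (hg : energy W i g ≠ ⊤) : energy W i (f - g) ≠ ⊤ := by
  rw [sub_eq_add_neg]
  refine ne_top_of_le_ne_top ?_ (energy_add_le W f (-g))
  rw [energy_neg]
  finiteness

theorem energy_ne_top_of_finite_support {f : (Fin (i + 1) → V) → ℂ} (hf : f.support.Finite) :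
    energy W i f ≠ ⊤ := by
  rw [energy_ne_top_iff, tsum_eq_sum (s := hf.toFinset) fun x hx => by simp_all]
  exact ENNReal.sum_ne_top.2 fun x _ => by finiteness

theorem energy_le_of_forall_finite {f : (Fin (i + 1) → V) → ℂ} {c : ℝ≥0∞}
    (h : ∀ A : Set V, A.Finite → energy W i ((tuplesIn A (i + 1)).indicator f) ≤ c) :
    energy W i f ≤ c := by
  rw [energy, ENNReal.tsum_eq_iSup_sum, ENNReal.mul_iSup]
  refine iSup_le fun s => ?_
  set A : Set V := ⋃ x ∈ s, Set.range x
  have hA : A.Finite := s.finite_toSet.biUnion fun x _ => Set.finite_range x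
  have hsA : ∀ x ∈ s, x ∈ tuplesIn A (i + 1) := fun x hx j => Set.mem_biUnion hx ⟨j, rfl⟩
  refine le_trans ?_ (h A hA)
  unfold energy
  gcongr
  refine (Finset.sum_le_sum fun x hx => ?_).trans (ENNReal.sum_le_tsum s)
  rw [Set.indicator_of_mem (hsA x hx)]

theorem EnergyTendsto.add {u v : ℕ → (Fin (i + 1) → V) → ℂ} {f g : (Fin (i + 1) → V) → ℂ}
    (hu : EnergyTendsto W i u f) (hv : EnergyTendsto W i v g) :
    EnergyTendsto W i (fun k => u k + v k) (f + g) := by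
  have hsum : Tendsto (fun k => energy W i (u k - f) + energy W i (v k - g)) atTop (𝓝 0) := by
    simpa using Tendsto.add hu hv
  refine tendsto_ennreal_zero_of_le_mul (ENNReal.ofNat_ne_top (n := 2)) hsum fun k => ?_
  rw [add_sub_add_comm]
  exact energy_add_le W _ _

theorem EnergyTendsto.tendstoL2 {u : ℕ → (Fin (i + 1) → V) → ℂ} {f : (Fin (i + 1) → V) → ℂ}
    (h : EnergyTendsto W i u f) : TendstoL2 W i u f := by
  have hreal := (ENNReal.tendsto_toReal ENNReal.zero_ne_top).comp h
  simp only [comp_def, toReal_energy, ENNReal.toReal_zero] at hreal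
  exact hreal

theorem TendstoL2.energyTendsto {u : ℕ → (Fin (i + 1) → V) → ℂ} {f : (Fin (i + 1) → V) → ℂ}
    (h : TendstoL2 W i u f) (hu : ∀ k, energy W i (u k) ≠ ⊤) (hf : energy W i f ≠ ⊤) :
    EnergyTendsto W i u f := by
  refine (ENNReal.tendsto_toReal_zero_iff fun k => energy_sub_ne_top W (hu k) hf).1 ?_
  simp only [toReal_energy]
  exact h

theorem enorm_inner2_sq_le (f g : (Fin (i + 1) → V) → ℂ) :
    ‖inner2 W i f g‖ₑ ^ 2 ≤ energy W i f * energy W i g := by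
  have hfac : ‖((Nat.factorial (i + 1) : ℕ) : ℂ)⁻¹‖ₑ = ((Nat.factorial (i + 1) : ℕ) : ℝ≥0∞)⁻¹ := by
    rw [enorm_inv (by exact_mod_cast Nat.factorial_ne_zero _), ← ofReal_norm]
    simp
  have hterm : ∀ x, ‖(W.m i x : ℂ) * f x * (starRingEnd ℂ) (g x)‖ₑ ^ 2 ≤
      (ENNReal.ofReal (W.m i x) * ‖f x‖ₑ ^ 2) * (ENNReal.ofReal (W.m i x) * ‖g x‖ₑ ^ 2) :=
    fun x => by
      rw [enorm_mul, enorm_mul, RCLike.enorm_conj, enorm_complex_ofReal,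
        Real.enorm_of_nonneg (W.nonneg i x)]
      exact le_of_eq (by ring)
  rw [inner2, enorm_mul, hfac, energy, energy, mul_pow, mul_mul_mul_comm, ← pow_two]
  gcongr
  exact (pow_le_pow_left' enorm_tsum_le_tsum_enorm 2).trans (ennreal_tsum_sq_le_tsum_mul_tsum hterm)

theorem enorm_inner2_self {f : (Fin (i + 1) → V) → ℂ} (hf : energy W i f ≠ ⊤) :
    ‖inner2 W i f f‖ₑ = energy W i f := by
  have hself : inner2 W i f f = (norm2 W i f : ℂ) := by
    simp [inner2, norm2, mul_assoc, Complex.mul_conj', Complex.ofReal_tsum]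
  rw [hself, ← toReal_energy, enorm_complex_ofReal, Real.enorm_of_nonneg ENNReal.toReal_nonneg,
    ENNReal.ofReal_toReal hf]

theorem inner2_indicator_left (S : Set (Fin (i + 1) → V)) (f g : (Fin (i + 1) → V) → ℂ) :
    inner2 W i (S.indicator f) g = inner2 W i f (S.indicator g) := by
  classical
  simp only [inner2, Set.indicator_apply]
  congr! 3 with x
  split_ifs <;> simp

end energy

/-! ### Summation by parts -/

section summationByParts

variable {G : WG V} {n i : ℕ} (W : CliqueWeights G n)

theorem m_faceEquiv (hi : i + 1 ≤ n) (p : Fin (i + 2)) (z : (Fin (i + 1) → V) × V) :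
    W.m (i + 1) (faceEquiv p z) = W.m (i + 1) (Fin.snoc z.1 z.2) := by
  obtain ⟨σ, hσ, -⟩ := faceEquiv_eq_snoc_comp_perm p z
  rw [hσ, W.m_comp_perm hi]

theorem IsAlternating.apply_faceEquiv {k : ℕ} {g : (Fin (k + 1) → V) → ℂ} (hg : IsAlternating g)
    (p : Fin (k + 1)) (z : (Fin k → V) × V) :
    g (faceEquiv p z) = (-1) ^ (p : ℕ) * (-1) ^ k * g (Fin.snoc z.1 z.2) := by
  obtain ⟨σ, hσ, hsign⟩ := faceEquiv_eq_snoc_comp_perm p z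
  rw [hσ, hg, hsign]

/-- The contribution of the simplex `(x, y)` and its face `x` to both sides of the summation by
parts formula `inner2_d`. -/
noncomputable def facePairing (f : (Fin (i + 1) → V) → ℂ) (g : (Fin (i + 2) → V) → ℂ)
    (z : (Fin (i + 1) → V) × V) : ℂ :=
  (W.m (i + 1) (Fin.snoc z.1 z.2) : ℂ) * f z.1 * (starRingEnd ℂ) (g (Fin.snoc z.1 z.2))

theorem summable_facePairing (hi : i + 1 ≤ n) {f : (Fin (i + 1) → V) → ℂ}
    {g : (Fin (i + 2) → V) → ℂ} (hfin : f.support.Finite ∨ g.support.Finite) :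
    Summable (facePairing W f g) := by
  refine summable_of_hasFiniteSupport ?_
  rcases hfin with hf | hg
  · refine (hf.biUnion fun x _ => (W.finite_m_snoc_ne_zero hi x).image (Prod.mk x)).subset ?_
    rintro ⟨x, y⟩ hz
    simp_all [facePairing]
  · refine (hg.preimage (f := fun z : (Fin (i + 1) → V) × V => Fin.snoc z.1 z.2) ?_).subset ?_
    · rintro ⟨x, y⟩ - ⟨x', y'⟩ - h
      simpa [Fin.snoc_inj] using h
    · rintro ⟨x, y⟩ hz
      simp_all [facePairing]

theorem tsum_facePairing (hi : i + 1 ≤ n) {f : (Fin (i + 1) → V) → ℂ}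
    {g : (Fin (i + 2) → V) → ℂ} (hf : ∀ x, ¬ IsSimplex G x → f x = 0)
    (hfin : f.support.Finite ∨ g.support.Finite) :
    ∑' z, facePairing W f g z =
      ∑' x, (W.m i x : ℂ) * f x * (starRingEnd ℂ) (delta G W i g x) := by
  rw [(summable_facePairing W hi hfin).tsum_prod]
  refine tsum_congr fun x => ?_
  by_cases hx : IsSimplex G x
  · have hm : (W.m i x : ℂ) ≠ 0 := by
      exact_mod_cast ((W.m_pos_iff (i.le_succ.trans hi) x).2 hx).ne'
    simp only [facePairing, mul_right_comm _ (f x), tsum_mul_right, delta_apply, map_mul, map_inv₀,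
      Complex.conj_ofReal, Complex.conj_tsum]
    field_simp
  · simp [facePairing, hf x hx]

theorem inner2_d (hi : i + 1 ≤ n) {f : (Fin (i + 1) → V) → ℂ} {g : (Fin (i + 2) → V) → ℂ}
    (hf : ∀ x, ¬ IsSimplex G x → f x = 0) (hg : IsCochain G (i + 1) g)
    (hfin : f.support.Finite ∨ g.support.Finite) :
    inner2 W (i + 1) (d G i f) g = (-1) ^ (i + 1) * inner2 W i f (delta G W i g) := by
  let T (j : Fin (i + 2)) (x : Fin (i + 2) → V) : ℂ :=
    (W.m (i + 1) x : ℂ) * ((-1) ^ (j : ℕ) * f (x ∘ j.succAbove)) * (starRingEnd ℂ) (g x)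
  have hT : ∀ j z, T j (faceEquiv j z) = (-1) ^ (i + 1) * facePairing W f g z := fun j z => by
    have hsq : ((-1 : ℂ) ^ (j : ℕ)) * (-1) ^ (j : ℕ) = 1 := by simp [← mul_pow]
    simp only [T, facePairing, m_faceEquiv W hi, hg.1.apply_faceEquiv, faceEquiv_comp_succAbove,
      map_mul, map_pow, map_neg, map_one]
    linear_combination ((-1) ^ (i + 1) * (W.m (i + 1) (Fin.snoc z.1 z.2) : ℂ) * f z.1 *
      (starRingEnd ℂ) (g (Fin.snoc z.1 z.2))) * hsq
  have hTsum : ∀ j, Summable (T j) := fun j => (faceEquiv j).summable_iff.1 <|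
    ((summable_facePairing W hi hfin).mul_left _).congr fun z => (hT j z).symm
  have hdT : ∀ x, (W.m (i + 1) x : ℂ) * d G i f x * (starRingEnd ℂ) (g x) = ∑ j, T j x := by
    intro x
    by_cases hx : IsSimplex G x
    · simp only [T, d_apply G f hx, Finset.mul_sum, Finset.sum_mul]
    · simp [T, hg.2 x hx]
  have hsum : ∀ j, ∑' x, T j x = (-1) ^ (i + 1) * ∑' z, facePairing W f g z := fun j => by
    rw [← (faceEquiv j).tsum_eq, ← tsum_mul_left]
    exact tsum_congr (hT j)
  have hfac : ((Nat.factorial (i + 1) : ℕ) : ℂ) ≠ 0 := by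
    exact_mod_cast Nat.factorial_ne_zero _
  simp only [inner2, hdT, Summable.tsum_finsetSum fun j _ => hTsum j, hsum,
    tsum_facePairing W hi hf hfin, Finset.sum_const, Finset.card_univ, Fintype.card_fin,
    nsmul_eq_mul, Nat.factorial_succ (i + 1), Nat.cast_mul]
  have hi2 : ((i + 1 + 1 : ℕ) : ℂ) ≠ 0 := Nat.cast_ne_zero.2 (i + 1).succ_ne_zero
  field_simp

end summationByParts

/-! ### The coupling between a region and its complement -/

section coupling

variable {G : WG V} {n i : ℕ} (W : CliqueWeights G n) (Λ : Set V)

/-- The block `P δ Q` of the codifferential, taking cochains off `Λ` to cochains over `Λ`; these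
are the components of `Coup`. -/
noncomputable def couplingDelta (i : ℕ) (g : (Fin (i + 2) → V) → ℂ) : (Fin (i + 1) → V) → ℂ :=
  (tuplesIn Λ (i + 1)).indicator (delta G W i ((tuplesIn Λ (i + 2))ᶜ.indicator g))

/-- The block `Q d P` of the coboundary, taking cochains over `Λ` to cochains off `Λ`; up to sign
it is the formal adjoint of `couplingDelta`. -/
noncomputable def couplingD (G : WG V) (Λ : Set V) (i : ℕ) (f : (Fin (i + 1) → V) → ℂ) :
    (Fin (i + 2) → V) → ℂ :=
  (tuplesIn Λ (i + 2))ᶜ.indicator (d G i ((tuplesIn Λ (i + 1)).indicator f))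

theorem IsCochain.couplingDelta (hi : i + 1 ≤ n) {g : (Fin (i + 2) → V) → ℂ}
    (hg : IsCochain G (i + 1) g) : IsCochain G i (couplingDelta W Λ i g) :=
  ((hg.indicator_compl_tuplesIn Λ).delta W hi).indicator_tuplesIn Λ

theorem IsCochain.couplingD {f : (Fin (i + 1) → V) → ℂ} (hf : IsCochain G i f) :
    IsCochain G (i + 1) (couplingD G Λ i f) :=
  (hf.indicator_tuplesIn Λ).d.indicator_compl_tuplesIn Λ

theorem couplingDelta_zero (i : ℕ) : couplingDelta W Λ i 0 = 0 := by
  simp only [couplingDelta, Set.indicator_zero', delta_zero]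

theorem finite_support_delta {g : (Fin (i + 2) → V) → ℂ} (hg : g.support.Finite) :
    (delta G W i g).support.Finite := by
  refine (hg.image fun x => x ∘ Fin.castSucc).subset fun x hx => ?_
  obtain ⟨y, hy⟩ : ∃ y, g (Fin.snoc x y) ≠ 0 := by
    by_contra! h
    exact hx (by simp [delta_apply, h])
  exact ⟨_, hy, funext fun j => by simp⟩

theorem energy_couplingDelta_ne_top {g : (Fin (i + 2) → V) → ℂ} (hg : g.support.Finite) :
    energy W i (couplingDelta W Λ i g) ≠ ⊤ :=
  ne_top_of_le_ne_top (energy_ne_top_of_finite_support W (finite_support_delta W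
    (finite_support_indicator hg _))) (energy_indicator_le W _ _)

theorem enorm_inner2_comm (f g : (Fin (i + 1) → V) → ℂ) :
    ‖inner2 W i f g‖ₑ = ‖inner2 W i g f‖ₑ := by
  have hconj : inner2 W i f g = (starRingEnd ℂ) (inner2 W i g f) := by
    simp [inner2, Complex.conj_tsum, mul_right_comm]
  rw [hconj, RCLike.enorm_conj]

theorem enorm_inner2_couplingD (hi : i + 1 ≤ n) {f : (Fin (i + 1) → V) → ℂ}
    {g : (Fin (i + 2) → V) → ℂ} (hf : IsCochain G i f) (hg : IsCochain G (i + 1) g)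
    (hfin : f.support.Finite ∨ g.support.Finite) :
    ‖inner2 W (i + 1) (couplingD G Λ i f) g‖ₑ = ‖inner2 W i f (couplingDelta W Λ i g)‖ₑ := by
  rw [couplingD, inner2_indicator_left, inner2_d W hi (hf.indicator_tuplesIn Λ).2
    (hg.indicator_compl_tuplesIn Λ) (hfin.imp (finite_support_indicator · _)
      (finite_support_indicator · _)), inner2_indicator_left, couplingDelta]
  simp [enorm_mul]

theorem energy_le_of_duality {j : ℕ} {f : (Fin (i + 1) → V) → ℂ} {h : (Fin (j + 1) → V) → ℂ}
    {T : ((Fin (j + 1) → V) → ℂ) → (Fin (i + 1) → V) → ℂ} {M : ℝ≥0∞} (hh : IsCochain G j h)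
    (hT : ∀ w, IsCochain G j w → w.support.Finite → energy W i (T w) ≤ M * energy W j w)
    (hdual : ∀ w, IsCochain G j w → w.support.Finite →
      ‖inner2 W j h w‖ₑ = ‖inner2 W i f (T w)‖ₑ) :
    energy W j h ≤ M * energy W i f := by
  refine energy_le_of_forall_finite W fun A hA => ?_
  set w := (tuplesIn A (j + 1)).indicator h with hw
  have hwc : IsCochain G j w := hh.indicator_tuplesIn A
  have hwfin : w.support.Finite := (finite_tuplesIn hA _).subset support_indicator_subset
  have hwtop : energy W j w ≠ ⊤ := energy_ne_top_of_finite_support W hwfin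
  have hself : energy W j w = ‖inner2 W i f (T w)‖ₑ := by
    rw [← hdual w hwc hwfin, ← enorm_inner2_self W hwtop]
    nth_rewrite 1 [hw]
    rw [inner2_indicator_left, hw, Set.indicator_indicator, Set.inter_self]
  have hsq : energy W j w * energy W j w ≤ M * energy W i f * energy W j w :=
    calc energy W j w * energy W j w = ‖inner2 W i f (T w)‖ₑ ^ 2 := by rw [← hself, sq]
      _ ≤ energy W i f * energy W i (T w) := enorm_inner2_sq_le W f _
      _ ≤ energy W i f * (M * energy W j w) := by gcongr; exact hT w hwc hwfin
      _ = M * energy W i f * energy W j w := by ring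
  rcases eq_or_ne (energy W j w) 0 with h0 | h0
  · exact h0.trans_le zero_le
  · exact (ENNReal.mul_le_mul_iff_left h0 hwtop).1 hsq

/-- Boundedness of the coupling in each degree separately, on finitely supported cochains, in terms
of energies. -/
def IsCouplingBound (M : ℝ≥0∞) : Prop :=
  ∀ i, i + 1 ≤ n → ∀ g, IsCochain G (i + 1) g → g.support.Finite →
    energy W i (couplingDelta W Λ i g) ≤ M * energy W (i + 1) g

variable {W Λ} {M : ℝ≥0∞}

theorem IsCouplingBound.energy_couplingD_le (hM : IsCouplingBound W Λ M) (hi : i + 1 ≤ n)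
    {f : (Fin (i + 1) → V) → ℂ} (hf : IsCochain G i f) :
    energy W (i + 1) (couplingD G Λ i f) ≤ M * energy W i f :=
  energy_le_of_duality W (hf.couplingD Λ) (hM i hi) fun _ hw hwfin =>
    enorm_inner2_couplingD W Λ hi hf hw (.inr hwfin)

theorem IsCouplingBound.energy_couplingDelta_le (hM : IsCouplingBound W Λ M) (hi : i + 1 ≤ n)
    {g : (Fin (i + 2) → V) → ℂ} (hg : IsCochain G (i + 1) g) :
    energy W i (couplingDelta W Λ i g) ≤ M * energy W (i + 1) g :=
  energy_le_of_duality W (hg.couplingDelta W Λ hi)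
    (fun _ hw _ => hM.energy_couplingD_le hi hw) fun w hw hwfin => by
      rw [enorm_inner2_comm, ← enorm_inner2_couplingD W Λ hi hw hg (.inl hwfin),
        enorm_inner2_comm]

end coupling

/-! ### Block decomposition of the Gauss–Bonnet operator -/

theorem indicator_d_indicator_compl (G : WG V) (Λ : Set V) {i : ℕ} (f : (Fin (i + 1) → V) → ℂ) :
    (tuplesIn Λ (i + 2)).indicator (d G i ((tuplesIn Λ (i + 1))ᶜ.indicator f)) = 0 := by
  refine Set.indicator_eq_zero.2 (Set.disjoint_right.2 fun x hx hd => hd ?_)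
  by_cases hs : IsSimplex G x
  · have hface : ∀ j : Fin (i + 2), x ∘ j.succAbove ∈ tuplesIn Λ (i + 1) := fun j l => hx _
    simp [d_apply G _ hs, hface]
  · exact d_apply_of_not_isSimplex G _ hs

theorem indicator_compl_delta_indicator {G : WG V} {n i : ℕ} (W : CliqueWeights G n) (Λ : Set V)
    (g : (Fin (i + 2) → V) → ℂ) :
    (tuplesIn Λ (i + 1))ᶜ.indicator (delta G W i ((tuplesIn Λ (i + 2)).indicator g)) = 0 := by
  refine Set.indicator_eq_zero.2 (Set.disjoint_right.2 fun x hx hd => hd ?_)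
  have hx' : x ∉ tuplesIn Λ (i + 1) := hx
  simp [delta_apply, snoc_mem_tuplesIn, hx']

section blocks

variable {G : WG V} {n : ℕ} (W : CliqueWeights G n) (Λ : Set V)
  {u v : ∀ i : ℕ, (Fin (i + 1) → V) → ℂ}

theorem projIn_add_projOut (u : ∀ i : ℕ, (Fin (i + 1) → V) → ℂ) :
    projIn Λ u + projOut Λ u = u := by
  funext i x
  simp [projOut]

theorem projIn_sub (u v : ∀ i : ℕ, (Fin (i + 1) → V) → ℂ) :
    projIn Λ (u - v) = projIn Λ u - projIn Λ v :=
  funext fun _ => Set.indicator_sub _ _ _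

theorem projOut_sub (u v : ∀ i : ℕ, (Fin (i + 1) → V) → ℂ) :
    projOut Λ (u - v) = projOut Λ u - projOut Λ v := by
  funext i
  simp only [projOut_eq_indicator_compl, Pi.sub_apply]
  exact Set.indicator_sub _ _ _

theorem projIn_apply_eq_zero {i : ℕ} (hu : u i = 0) : projIn Λ u i = 0 := by
  simp only [projIn, hu, Set.indicator_zero']

theorem projOut_apply_eq_zero {i : ℕ} (hu : u i = 0) : projOut Λ u i = 0 := by
  rw [projOut_eq_indicator_compl, hu, Set.indicator_zero']

theorem projIn_eq_self (hu : ∀ i, projOut Λ u i = 0) : projIn Λ u = u := by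
  have hout : projOut Λ u = 0 := funext hu
  simpa [hout] using projIn_add_projOut Λ u

theorem projOut_eq_self (hu : ∀ i, projIn Λ u i = 0) : projOut Λ u = u := by
  have hin : projIn Λ u = 0 := funext hu
  simpa [hin] using projIn_add_projOut Λ u

theorem projOut_projIn (u : ∀ i : ℕ, (Fin (i + 1) → V) → ℂ) (i : ℕ) :
    projOut Λ (projIn Λ u) i = 0 := by
  rw [projOut_eq_indicator_compl]
  refine (Set.indicator_indicator _ _ _).trans ?_
  simp only [tuplesIn, Set.compl_inter_self, Set.indicator_empty']

theorem projIn_projOut (u : ∀ i : ℕ, (Fin (i + 1) → V) → ℂ) (i : ℕ) :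
    projIn Λ (projOut Λ u) i = 0 := by
  simp only [projIn, projOut_eq_indicator_compl]
  refine (Set.indicator_indicator _ _ _).trans ?_
  simp only [tuplesIn, Set.inter_compl_self, Set.indicator_empty']

theorem Dop_succ {i : ℕ} (hi : i + 1 ≤ n) (u : ∀ i : ℕ, (Fin (i + 1) → V) → ℂ) :
    Dop G W u (i + 1) = d G i (u i) + delta G W (i + 1) (u (i + 2)) := by
  simp only [Dop, hi, if_true]
  rfl

theorem Dop_succ_of_lt {i : ℕ} (hi : n < i + 1) (u : ∀ i : ℕ, (Fin (i + 1) → V) → ℂ) :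
    Dop G W u (i + 1) = 0 := by
  simp [Dop, hi.not_ge]

theorem delta_add_of_vanishing (hv : ∀ i, n < i → v i = 0) (i : ℕ) :
    delta G W i (u (i + 1) + v (i + 1)) = delta G W i (u (i + 1)) + delta G W i (v (i + 1)) := by
  rcases le_or_gt (i + 1) n with hi | hi
  · exact delta_add W hi _ _
  · simp [hv _ hi, delta_zero]

theorem Dop_add (hv : ∀ i, n < i → v i = 0) :
    Dop G W (u + v) = Dop G W u + Dop G W v := by
  funext i
  rcases i with _ | i
  · exact delta_add_of_vanishing W hv 0
  rcases le_or_gt (i + 1) n with hi | hi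
  · simp only [Pi.add_apply, Dop_succ W hi, d_add, delta_add_of_vanishing W hv (i + 1)]
    abel
  · simp [Dop_succ_of_lt W hi]

theorem Dop_sub (hv : ∀ i, n < i → v i = 0) :
    Dop G W (u - v) = Dop G W u - Dop G W v :=
  eq_sub_of_add_eq (by rw [← Dop_add W hv, sub_add_cancel])

/-- The coupling block `Q D P`, the formal adjoint of `Coup`. -/
noncomputable def CoupAdj (G : WG V) (W : CliqueWeights G n) (Λ : Set V)
    (u : ∀ i : ℕ, (Fin (i + 1) → V) → ℂ) : ∀ i : ℕ, (Fin (i + 1) → V) → ℂ :=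
  projOut Λ (Dop G W (projIn Λ u))

theorem projIn_Dop (hu : ∀ i, n < i → u i = 0) :
    projIn Λ (Dop G W u) = Din G W Λ u + Coup G W Λ u := by
  rw [Din, Coup, ← sub_eq_iff_eq_add, ← projIn_sub, ← Dop_sub W
    fun i hi => projOut_apply_eq_zero Λ (hu i hi), sub_eq_of_eq_add (projIn_add_projOut Λ u).symm]

theorem projOut_Dop (hu : ∀ i, n < i → u i = 0) :
    projOut Λ (Dop G W u) = CoupAdj G W Λ u + Dout G W Λ u := by
  rw [CoupAdj, Dout, ← sub_eq_iff_eq_add, ← projOut_sub, ← Dop_sub W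
    fun i hi => projOut_apply_eq_zero Λ (hu i hi), sub_eq_of_eq_add (projIn_add_projOut Λ u).symm]

theorem Coup_apply (hu : ∀ i, n < i → u i = 0) (i : ℕ) :
    Coup G W Λ u i = couplingDelta W Λ i (u (i + 1)) := by
  rcases i with _ | i
  · simp only [Coup, projIn, Dop, projOut_eq_indicator_compl]
    rfl
  rcases le_or_gt (i + 1) n with hi | hi
  · have hsplit := Set.indicator_add' (tuplesIn Λ (i + 2)) (d G i (projOut Λ u i))
      (delta G W (i + 1) (projOut Λ u (i + 2)))
    simp only [projOut_eq_indicator_compl, indicator_d_indicator_compl, zero_add] at hsplit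
    simp only [Coup, projIn, Dop_succ W hi, projOut_eq_indicator_compl]
    exact hsplit
  · rw [hu _ (hi.trans (i + 1).lt_succ_self), couplingDelta_zero]
    exact projIn_apply_eq_zero Λ (Dop_succ_of_lt W hi _)

theorem CoupAdj_apply_zero (u : ∀ i : ℕ, (Fin (i + 1) → V) → ℂ) : CoupAdj G W Λ u 0 = 0 := by
  simp only [CoupAdj, Dop, projOut_eq_indicator_compl]
  exact indicator_compl_delta_indicator W Λ _

theorem CoupAdj_apply_succ {i : ℕ} (hi : i + 1 ≤ n) (u : ∀ i : ℕ, (Fin (i + 1) → V) → ℂ) :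
    CoupAdj G W Λ u (i + 1) = couplingD G Λ i (u i) := by
  have hsplit := Set.indicator_add' (tuplesIn Λ (i + 2))ᶜ (d G i (projIn Λ u i))
    (delta G W (i + 1) (projIn Λ u (i + 2)))
  have hzero := indicator_compl_delta_indicator W Λ (u (i + 2))
  simp only [CoupAdj, projOut_eq_indicator_compl, Dop_succ W hi]
  exact hsplit.trans (add_eq_left.2 hzero)

variable {W Λ}

theorem energy_Coup_le {M : ℝ≥0∞} (hM : IsCouplingBound W Λ M) (hu : CochainFamily G n u) (i : ℕ) :
    energy W i (Coup G W Λ u i) ≤ M * energy W (i + 1) (u (i + 1)) := by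
  rw [Coup_apply W Λ hu.2]
  rcases le_or_gt (i + 1) n with hi | hi
  · exact hM.energy_couplingDelta_le hi (hu.1 _)
  · simp [hu.2 _ hi, couplingDelta_zero, energy_zero]

theorem energy_CoupAdj_succ_le {M : ℝ≥0∞} (hM : IsCouplingBound W Λ M) (hu : CochainFamily G n u)
    (i : ℕ) : energy W (i + 1) (CoupAdj G W Λ u (i + 1)) ≤ M * energy W i (u i) := by
  rcases le_or_gt (i + 1) n with hi | hi
  · rw [CoupAdj_apply_succ W Λ hi]
    exact hM.energy_couplingD_le hi (hu.1 i)
  · rw [CoupAdj, projOut_apply_eq_zero Λ (Dop_succ_of_lt W hi _), energy_zero]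
    exact zero_le

end blocks

/-! ### Decoupling -/

section decoupling

variable {G : WG V} {n : ℕ}

/-- Essential self-adjointness of the diagonal block `D_in` on the cochains over `Λ`, phrased by
graph-norm approximation as in `ESA_D`. -/
def ESA_Din (W : CliqueWeights G n) (Λ : Set V) : Prop :=
  ∀ u : ∀ i : ℕ, (Fin (i + 1) → V) → ℂ,
    CochainFamily G n u → (∀ i, projOut Λ u i = 0) →
    MemL2Family W u → MemL2Family W (Din G W Λ u) →
    ∃ uk : ℕ → ∀ i : ℕ, (Fin (i + 1) → V) → ℂ,
      (∀ k, CochainFamily G n (uk k) ∧ FinSuppFamily (uk k) ∧ ∀ i, projOut Λ (uk k) i = 0) ∧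
      TendstoL2Family W uk u ∧
      TendstoL2Family W (fun k => Din G W Λ (uk k)) (Din G W Λ u)

/-- Essential self-adjointness of the diagonal block `D_out` on the cochains vanishing over `Λ`,
phrased by graph-norm approximation as in `ESA_D`. -/
def ESA_Dout (W : CliqueWeights G n) (Λ : Set V) : Prop :=
  ∀ u : ∀ i : ℕ, (Fin (i + 1) → V) → ℂ,
    CochainFamily G n u → (∀ i, projIn Λ u i = 0) →
    MemL2Family W u → MemL2Family W (Dout G W Λ u) →
    ∃ uk : ℕ → ∀ i : ℕ, (Fin (i + 1) → V) → ℂ,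
      (∀ k, CochainFamily G n (uk k) ∧ FinSuppFamily (uk k) ∧ ∀ i, projIn Λ (uk k) i = 0) ∧
      TendstoL2Family W uk u ∧
      TendstoL2Family W (fun k => Dout G W Λ (uk k)) (Dout G W Λ u)

theorem norm2_nonneg (W : CliqueWeights G n) (i : ℕ) (f : (Fin (i + 1) → V) → ℂ) :
    0 ≤ norm2 W i f := by
  rw [← toReal_energy]
  exact ENNReal.toReal_nonneg

theorem ofReal_norm2 (W : CliqueWeights G n) {i : ℕ} {f : (Fin (i + 1) → V) → ℂ}
    (hf : energy W i f ≠ ⊤) : ENNReal.ofReal (norm2 W i f) = energy W i f := by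
  rw [← toReal_energy, ENNReal.ofReal_toReal hf]

theorem normH_single (W : CliqueWeights G n) {i : ℕ} (hi : i ≤ n) (g : (Fin (i + 1) → V) → ℂ) :
    normH W (Pi.single i g) = norm2 W i g := by
  rw [normH, Finset.sum_eq_single_of_mem i (by simpa [Nat.lt_succ_iff] using hi) fun j _ hj => by
    simp [Pi.single_eq_of_ne hj, norm2], Pi.single_eq_same]

theorem isCouplingBound_of_normH_le {W : CliqueWeights G n} {Λ : Set V} {M : ℝ}
    (hM : ∀ u : ∀ i : ℕ, (Fin (i + 1) → V) → ℂ, CochainFamily G n u → FinSuppFamily u →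
      normH W (Coup G W Λ u) ≤ M * normH W u) :
    IsCouplingBound W Λ (ENNReal.ofReal M) := by
  intro i hi g hg hgfin
  let u : ∀ j : ℕ, (Fin (j + 1) → V) → ℂ := Pi.single (i + 1) g
  have hu : ∀ j, j = i + 1 ∨ u j = 0 := fun j => or_iff_not_imp_left.2 fun hj => by
    simp only [u, Pi.single_eq_of_ne hj]
  have hu1 : u (i + 1) = g := Pi.single_eq_same ..
  have hvanish : ∀ j, n < j → u j = 0 := fun j hj => (hu j).resolve_left (by lia)
  have hcochain : CochainFamily G n u := by
    refine ⟨fun j => ?_, hvanish⟩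
    rcases hu j with rfl | hj
    · rwa [hu1]
    · rw [hj]
      exact IsCochain.zero
  have hfin : FinSuppFamily u := fun j => by
    rcases hu j with rfl | hj
    · rwa [hu1]
    · simp [hj]
  have hbound : norm2 W i (couplingDelta W Λ i g) ≤ M * norm2 W (i + 1) g :=
    calc norm2 W i (couplingDelta W Λ i g) = norm2 W i (Coup G W Λ u i) := by
          rw [Coup_apply W Λ hvanish, hu1]
      _ ≤ normH W (Coup G W Λ u) :=
          Finset.single_le_sum (f := fun j => norm2 W j (Coup G W Λ u j))
            (fun j _ => norm2_nonneg W j _) (Finset.mem_range.2 (by lia))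
      _ ≤ M * norm2 W (i + 1) g := by
          rw [← normH_single W hi g]
          exact hM u hcochain hfin
  rw [← ofReal_norm2 W (energy_couplingDelta_ne_top W Λ hgfin),
    ← ofReal_norm2 W (energy_ne_top_of_finite_support W hgfin),
    ← ENNReal.ofReal_mul' (norm2_nonneg W _ _)]
  exact ENNReal.ofReal_le_ofReal hbound

variable {W : CliqueWeights G n} {Λ : Set V} {M : ℝ≥0∞}
  {u : ∀ i : ℕ, (Fin (i + 1) → V) → ℂ}

theorem CochainFamily.projIn (hu : CochainFamily G n u) (Λ : Set V) :
    CochainFamily G n (projIn Λ u) :=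
  ⟨fun i => (hu.1 i).indicator_tuplesIn Λ, fun i hi => projIn_apply_eq_zero Λ (hu.2 i hi)⟩

theorem CochainFamily.projOut (hu : CochainFamily G n u) (Λ : Set V) :
    CochainFamily G n (projOut Λ u) :=
  ⟨fun i => by
    rw [projOut_eq_indicator_compl]
    exact (hu.1 i).indicator_compl_tuplesIn Λ, fun i hi => projOut_apply_eq_zero Λ (hu.2 i hi)⟩

theorem CochainFamily.add {v : ∀ i : ℕ, (Fin (i + 1) → V) → ℂ} (hu : CochainFamily G n u)
    (hv : CochainFamily G n v) : CochainFamily G n (u + v) :=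
  ⟨fun i => (hu.1 i).add (hv.1 i), fun i hi => by simp [hu.2 i hi, hv.2 i hi]⟩

theorem CochainFamily.sub {v : ∀ i : ℕ, (Fin (i + 1) → V) → ℂ} (hu : CochainFamily G n u)
    (hv : CochainFamily G n v) : CochainFamily G n (u - v) :=
  ⟨fun i => (hu.1 i).sub (hv.1 i), fun i hi => by simp [hu.2 i hi, hv.2 i hi]⟩

theorem energy_projIn_le (u : ∀ i : ℕ, (Fin (i + 1) → V) → ℂ) (i : ℕ) :
    energy W i (projIn Λ u i) ≤ energy W i (u i) :=
  energy_indicator_le W _ _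

theorem energy_projOut_le (u : ∀ i : ℕ, (Fin (i + 1) → V) → ℂ) (i : ℕ) :
    energy W i (projOut Λ u i) ≤ energy W i (u i) := by
  rw [projOut_eq_indicator_compl]
  exact energy_indicator_le W _ _

theorem memL2Family_iff : MemL2Family W u ↔ ∀ i, energy W i (u i) ≠ ⊤ :=
  forall_congr' fun _ => memL2_iff_energy_ne_top W

theorem memL2Family_Din (hM : IsCouplingBound W Λ M) (hMtop : M ≠ ⊤) (hu : CochainFamily G n u)
    (huL : MemL2Family W u) (hDu : MemL2Family W (Dop G W u)) :
    MemL2Family W (Din G W Λ u) := by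
  rw [memL2Family_iff] at *
  intro i
  rw [show Din G W Λ u = projIn Λ (Dop G W u) - Coup G W Λ u from
    eq_sub_of_add_eq (projIn_Dop W Λ hu.2).symm]
  exact energy_sub_ne_top W (ne_top_of_le_ne_top (hDu i) (energy_projIn_le _ i))
    (ne_top_of_le_ne_top (ENNReal.mul_ne_top hMtop (huL _)) (energy_Coup_le hM hu i))

theorem energy_CoupAdj_ne_top (hM : IsCouplingBound W Λ M) (hMtop : M ≠ ⊤)
    (hu : CochainFamily G n u) (huL : ∀ i, energy W i (u i) ≠ ⊤) (i : ℕ) :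
    energy W i (CoupAdj G W Λ u i) ≠ ⊤ := by
  rcases i with _ | i
  · simp [CoupAdj_apply_zero, energy_zero]
  · exact ne_top_of_le_ne_top (ENNReal.mul_ne_top hMtop (huL i)) (energy_CoupAdj_succ_le hM hu i)

theorem memL2Family_Dout (hM : IsCouplingBound W Λ M) (hMtop : M ≠ ⊤) (hu : CochainFamily G n u)
    (huL : MemL2Family W u) (hDu : MemL2Family W (Dop G W u)) :
    MemL2Family W (Dout G W Λ u) := by
  rw [memL2Family_iff] at *
  intro i
  rw [show Dout G W Λ u = projOut Λ (Dop G W u) - CoupAdj G W Λ u from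
    eq_sub_of_add_eq' (projOut_Dop W Λ hu.2).symm]
  exact energy_sub_ne_top W (ne_top_of_le_ne_top (hDu i) (energy_projOut_le _ i))
    (energy_CoupAdj_ne_top hM hMtop hu huL i)

theorem finite_support_d {i : ℕ} {f : (Fin (i + 1) → V) → ℂ} (hf : f.support.Finite) :
    (d G i f).support.Finite := by
  let A : Set V := ⋃ z ∈ f.support, insert (z 0) {y | G.Adj (z 0) y}
  have hA : A.Finite := hf.biUnion fun z _ => (G.locFin (z 0)).insert (z 0)
  refine (finite_tuplesIn hA (i + 2)).subset fun x hx b => ?_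
  have hs : IsSimplex G x := not_not.1 (mt (d_apply_of_not_isSimplex G f) hx)
  obtain ⟨j, hj⟩ : ∃ j : Fin (i + 2), f (x ∘ j.succAbove) ≠ 0 := by
    by_contra! h
    exact hx (by simp [d_apply G f hs, h])
  refine Set.mem_biUnion hj ?_
  rcases eq_or_ne b (j.succAbove 0) with rfl | hb
  · exact Set.mem_insert _ _
  · exact Set.mem_insert_of_mem _ (hs.2 _ _ hb.symm)

namespace FinSuppFamily

theorem projIn (hu : FinSuppFamily u) (Λ : Set V) : FinSuppFamily (projIn Λ u) :=
  fun i => finite_support_indicator (hu i) _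

theorem projOut (hu : FinSuppFamily u) (Λ : Set V) : FinSuppFamily (projOut Λ u) := fun i => by
  rw [projOut_eq_indicator_compl]
  exact finite_support_indicator (hu i) _

theorem add {v : ∀ i : ℕ, (Fin (i + 1) → V) → ℂ} (hu : FinSuppFamily u) (hv : FinSuppFamily v) :
    FinSuppFamily (u + v) :=
  fun i => ((hu i).union (hv i)).subset (support_add _ _)

theorem Dop (hu : FinSuppFamily u) (W : CliqueWeights G n) : FinSuppFamily (Dop G W u)
  | 0 => finite_support_delta W (hu 1)
  | i + 1 => by
    rcases le_or_gt (i + 1) n with hi | hi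
    · rw [Dop_succ W hi]
      exact ((finite_support_d (hu i)).union (finite_support_delta W (hu (i + 2)))).subset
        (support_add _ _)
    · simp [Dop_succ_of_lt W hi]

theorem energy_ne_top (hu : FinSuppFamily u) (W : CliqueWeights G n) (i : ℕ) :
    energy W i (u i) ≠ ⊤ :=
  energy_ne_top_of_finite_support W (hu i)

end FinSuppFamily

theorem Coup_sub {v : ∀ i : ℕ, (Fin (i + 1) → V) → ℂ} (hv : ∀ i, n < i → v i = 0) :
    Coup G W Λ (u - v) = Coup G W Λ u - Coup G W Λ v := by
  rw [Coup, projOut_sub, Dop_sub W fun i hi => projOut_apply_eq_zero Λ (hv i hi), projIn_sub]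
  rfl

theorem CoupAdj_sub {v : ∀ i : ℕ, (Fin (i + 1) → V) → ℂ} (hv : ∀ i, n < i → v i = 0) :
    CoupAdj G W Λ (u - v) = CoupAdj G W Λ u - CoupAdj G W Λ v := by
  rw [CoupAdj, projIn_sub, Dop_sub W fun i hi => projIn_apply_eq_zero Λ (hv i hi), projOut_sub]
  rfl

theorem energyTendsto_Coup (hM : IsCouplingBound W Λ M) (hMtop : M ≠ ⊤)
    {uk : ℕ → ∀ i : ℕ, (Fin (i + 1) → V) → ℂ} (huk : ∀ k, CochainFamily G n (uk k))
    (hu : CochainFamily G n u) (h : ∀ i, EnergyTendsto W i (fun k => uk k i) (u i)) (i : ℕ) :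
    EnergyTendsto W i (fun k => Coup G W Λ (uk k) i) (Coup G W Λ u i) := by
  refine tendsto_ennreal_zero_of_le_mul hMtop (h (i + 1)) fun k => ?_
  have hbound := energy_Coup_le hM ((huk k).sub hu) i
  rwa [Coup_sub hu.2] at hbound

theorem energyTendsto_CoupAdj (hM : IsCouplingBound W Λ M) (hMtop : M ≠ ⊤)
    {uk : ℕ → ∀ i : ℕ, (Fin (i + 1) → V) → ℂ} (huk : ∀ k, CochainFamily G n (uk k))
    (hu : CochainFamily G n u) (h : ∀ i, EnergyTendsto W i (fun k => uk k i) (u i)) (i : ℕ) :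
    EnergyTendsto W i (fun k => CoupAdj G W Λ (uk k) i) (CoupAdj G W Λ u i) := by
  rcases i with _ | i
  · simp [EnergyTendsto, CoupAdj_apply_zero, energy_zero]
  · refine tendsto_ennreal_zero_of_le_mul hMtop (h i) fun k => ?_
    have hbound := energy_CoupAdj_succ_le hM ((huk k).sub hu) i
    rwa [CoupAdj_sub hu.2] at hbound

theorem TendstoL2Family.energyTendsto {uk : ℕ → ∀ i : ℕ, (Fin (i + 1) → V) → ℂ}
    (h : TendstoL2Family W uk u) (huk : ∀ k, FinSuppFamily (uk k)) (hu : MemL2Family W u) (i : ℕ) :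
    EnergyTendsto W i (fun k => uk k i) (u i) :=
  (h i).energyTendsto W (fun k => (huk k).energy_ne_top W i) (memL2Family_iff.1 hu i)

theorem Dop_eq_blocks (hu : ∀ i, n < i → u i = 0) :
    Dop G W u = Din G W Λ u + Coup G W Λ u + (CoupAdj G W Λ u + Dout G W Λ u) := by
  rw [← projIn_Dop W Λ hu, ← projOut_Dop W Λ hu, projIn_add_projOut]

theorem Din_add_of_projIn_eq_zero {v : ∀ i : ℕ, (Fin (i + 1) → V) → ℂ}
    (hv : ∀ i, projIn Λ v i = 0) : Din G W Λ (u + v) = Din G W Λ u := by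
  have hsub := projIn_sub Λ (u + v) v
  rw [add_sub_cancel_right, show projIn Λ v = 0 from funext hv, sub_zero] at hsub
  rw [Din, Din, hsub]

theorem Dout_add_of_projOut_eq_zero {v : ∀ i : ℕ, (Fin (i + 1) → V) → ℂ}
    (hu : ∀ i, projOut Λ u i = 0) : Dout G W Λ (u + v) = Dout G W Λ v := by
  have hsub := projOut_sub Λ (u + v) u
  rw [add_sub_cancel_left, show projOut Λ u = 0 from funext hu, sub_zero] at hsub
  rw [Dout, Dout, hsub]

theorem energyTendsto_Dop_of_blocks (hM : IsCouplingBound W Λ M) (hMtop : M ≠ ⊤)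
    {uk : ℕ → ∀ i : ℕ, (Fin (i + 1) → V) → ℂ} (huk : ∀ k, CochainFamily G n (uk k))
    (hu : CochainFamily G n u) (h : ∀ i, EnergyTendsto W i (fun k => uk k i) (u i))
    (hin : ∀ i, EnergyTendsto W i (fun k => Din G W Λ (uk k) i) (Din G W Λ u i))
    (hout : ∀ i, EnergyTendsto W i (fun k => Dout G W Λ (uk k) i) (Dout G W Λ u i)) (i : ℕ) :
    EnergyTendsto W i (fun k => Dop G W (uk k) i) (Dop G W u i) := by
  simp only [Dop_eq_blocks (W := W) (Λ := Λ) hu.2, Dop_eq_blocks (W := W) (Λ := Λ) (huk _).2]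
  exact ((hin i).add W (energyTendsto_Coup hM hMtop huk hu h i)).add W
    ((energyTendsto_CoupAdj hM hMtop huk hu h i).add W (hout i))

theorem esa_D_of_blocks (hin : ESA_Din W Λ) (hout : ESA_Dout W Λ) (hM : IsCouplingBound W Λ M)
    (hMtop : M ≠ ⊤) : ESA_D W := by
  intro u hu huL hDu
  have huE := memL2Family_iff.1 huL
  have hinL : MemL2Family W (projIn Λ u) := memL2Family_iff.2 fun i =>
    ne_top_of_le_ne_top (huE i) (energy_projIn_le u i)
  have houtL : MemL2Family W (projOut Λ u) := memL2Family_iff.2 fun i =>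
    ne_top_of_le_ne_top (huE i) (energy_projOut_le u i)
  have hDinL := memL2Family_Din hM hMtop hu huL hDu
  have hDoutL := memL2Family_Dout hM hMtop hu huL hDu
  have hDin : Din G W Λ (projIn Λ u) = Din G W Λ u := by
    rw [Din, Din, projIn_eq_self Λ (projOut_projIn Λ u)]
  have hDout : Dout G W Λ (projOut Λ u) = Dout G W Λ u := by
    rw [Dout, Dout, projOut_eq_self Λ (projIn_projOut Λ u)]
  obtain ⟨w, hw, hwu, hDw⟩ := hin _ (hu.projIn Λ) (projOut_projIn Λ u) hinL (hDin.symm ▸ hDinL)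
  obtain ⟨v, hv, hvu, hDv⟩ := hout _ (hu.projOut Λ) (projIn_projOut Λ u) houtL (hDout.symm ▸ hDoutL)
  rw [hDin] at hDw
  rw [hDout] at hDv
  have hconv : ∀ i, EnergyTendsto W i (fun k => w k i + v k i) (u i) := fun i => by
    have hsum := (hwu.energyTendsto (fun k => (hw k).2.1) hinL i).add W
      (hvu.energyTendsto (fun k => (hv k).2.1) houtL i)
    rwa [← Pi.add_apply, projIn_add_projOut] at hsum
  refine ⟨fun k => w k + v k, fun k => ⟨(hw k).1.add (hv k).1, (hw k).2.1.add (hv k).2.1⟩,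
    fun i => (hconv i).tendstoL2 W, fun i => (energyTendsto_Dop_of_blocks hM hMtop
      (fun k => (hw k).1.add (hv k).1) hu hconv (fun i => ?_) (fun i => ?_) i).tendstoL2 W⟩
  · simp only [Din_add_of_projIn_eq_zero (hv _).2.2]
    exact hDw.energyTendsto (fun k => (((hw k).2.1.projIn Λ).Dop W).projIn Λ) hDinL i
  · simp only [Dout_add_of_projOut_eq_zero (hw _).2.2]
    exact hDv.energyTendsto (fun k => (((hv k).2.1.projOut Λ).Dop W).projOut Λ) hDoutL i

end decoupling

/-! ### Cut-off functions -/

section cutoffs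

variable {G : WG V} {n j : ℕ} {W : CliqueWeights G n} {Λ : Set V}

theorem avg_comp_succAbove (χ : V → ℝ) (z : Fin (j + 2) → V) (a : Fin (j + 2)) :
    avg χ (z ∘ a.succAbove) = ((j + 1 : ℕ) : ℂ)⁻¹ * ((∑ b, (χ (z b) : ℂ)) - χ (z a)) := by
  rw [avg, Fin.sum_univ_succAbove _ a, add_sub_cancel_left]
  rfl

theorem dOn_apply (f : (Fin (j + 1) → V) → ℂ) {z : Fin (j + 2) → V} (hz : IsSimplex G z)
    (hzΛ : z ∈ tuplesIn Λ (j + 2)) :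
    dOn G Λ j f z = ∑ a : Fin (j + 2), (-1 : ℂ) ^ (a : ℕ) * f (z ∘ a.succAbove) :=
  Set.indicator_of_mem (show z ∈ {x | IsSimplex G x ∧ ∀ j, x j ∈ Λ} from ⟨hz, hzΛ⟩) _

theorem sum_neg_one_pow_fin (k : ℕ) :
    ∑ a : Fin k, (-1 : ℂ) ^ (a : ℕ) = if Even k then 0 else 1 := by
  rw [Fin.sum_univ_eq_sum_range (fun a => (-1 : ℂ) ^ a), neg_one_geom_sum]

theorem dOn_avg_of_even (χ : V → ℝ) (hj : Even j) {z : Fin (j + 2) → V} (hz : IsSimplex G z)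
    (hzΛ : z ∈ tuplesIn Λ (j + 2)) :
    ((j + 1 : ℕ) : ℂ) * dOn G Λ j (avg χ) z =
      -∑ a : Fin (j + 2), (-1) ^ (a : ℕ) * (χ (z a) : ℂ) := by
  have hj1 : ((j + 1 : ℕ) : ℂ) ≠ 0 := Nat.cast_ne_zero.2 j.succ_ne_zero
  have hsum := sum_neg_one_pow_fin (j + 2)
  rw [if_pos (hj.add even_two)] at hsum
  simp only [dOn_apply _ hz hzΛ, avg_comp_succAbove, Finset.mul_sum, mul_left_comm _ ((-1 : ℂ) ^ _),
    mul_inv_cancel_left₀ hj1, mul_sub, Finset.sum_sub_distrib]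
  simp only [← Finset.mul_sum, ← Finset.sum_mul, hsum, zero_mul, zero_sub]

/-- The alternating sums of `x` and of its cyclic rotation cancel except at `x 0` and at `y`. -/
theorem alternating_sum_add_rotate (c : V → ℂ) (hj : Even j) (x : Fin (j + 1) → V) (y : V) :
    (∑ a : Fin (j + 2), (-1) ^ (a : ℕ) * c ((Fin.snoc x y : Fin (j + 2) → V) a)) +
      ∑ a : Fin (j + 2), (-1) ^ (a : ℕ) *
        c ((Fin.snoc (x ∘ finRotate (j + 1)) y : Fin (j + 2) → V) a) =
      2 * (c (x 0) - c y) := by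
  rw [Fin.sum_univ_castSucc, Fin.sum_univ_castSucc (n := j + 1)]
  simp only [Fin.snoc_castSucc, Fin.snoc_last, Fin.val_castSucc, Fin.val_last]
  rw [Fin.sum_univ_succ, Fin.sum_univ_castSucc (n := j)]
  simp only [Function.comp_apply, finRotate_apply, Fin.coeSucc_eq_succ, Fin.last_add_one,
    Fin.val_castSucc, Fin.val_last, Fin.val_succ, Fin.val_zero, pow_zero, pow_succ,
    hj.neg_one_pow, mul_neg, mul_one, neg_mul, Finset.sum_neg_distrib]
  ring

theorem tsum_coface_dOn_avg_le {χ : V → ℝ} {C : ℝ} (hj : j + 1 ≤ n) {x : Fin (j + 1) → V}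
    (hx : IsSimplex G x) (h : gradEnergyOn W Λ j χ x ≤ C) :
    ∑' y : Λ, ENNReal.ofReal (W.m (j + 1) (Fin.snoc x y.1)) *
        ‖dOn G Λ j (avg χ) (Fin.snoc x y.1)‖ₑ ^ 2 ≤
      ENNReal.ofReal C * ENNReal.ofReal (W.m j x) := by
  have hm := (W.m_pos_iff (j.le_succ.trans hj) x).2 hx
  let F (y : V) : ℝ := W.m (j + 1) (Fin.snoc x y) * ‖dOn G Λ j (avg χ) (Fin.snoc x y)‖ ^ 2
  have hF : ∀ y, ENNReal.ofReal (F y) = ENNReal.ofReal (W.m (j + 1) (Fin.snoc x y)) *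
      ‖dOn G Λ j (avg χ) (Fin.snoc x y)‖ₑ ^ 2 := fun y => by
    rw [ENNReal.ofReal_mul (W.nonneg _ _), ENNReal.ofReal_pow (norm_nonneg _), ofReal_norm]
  have hsum : Summable F := summable_of_hasFiniteSupport <|
    (W.finite_m_snoc_ne_zero hj x).subset fun y hy => left_ne_zero_of_mul hy
  have hle : ∑' y : Λ, F y ≤ C * W.m j x := by
    rw [gradEnergyOn, inv_mul_le_iff₀ hm, mul_comm] at h
    rwa [tsum_subtype]
  simp only [← hF]
  rw [← ENNReal.ofReal_tsum_of_nonneg (f := fun y : Λ => F y)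
    (fun y => mul_nonneg (W.nonneg _ _) (sq_nonneg _)) (hsum.subtype Λ),
    ← ENNReal.ofReal_mul' (W.nonneg _ _)]
  exact ENNReal.ofReal_le_ofReal hle

theorem enorm_sub_sq_le_dOn_avg (χ : V → ℝ) (hj : Even j) {x : Fin (j + 1) → V} {y : V}
    (hz : IsSimplex G (Fin.snoc x y : Fin (j + 2) → V)) (hxΛ : x ∈ tuplesIn Λ (j + 1))
    (hy : y ∈ Λ) :
    ‖χ (x 0) - χ y‖ₑ ^ 2 ≤ 2 * ((j + 1 : ℕ) : ℝ≥0∞) ^ 2 *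
      (‖dOn G Λ j (avg χ) (Fin.snoc x y)‖ₑ ^ 2 +
        ‖dOn G Λ j (avg χ) (Fin.snoc (x ∘ finRotate (j + 1)) y)‖ₑ ^ 2) := by
  obtain ⟨τ, hτ, -⟩ := snoc_comp_perm (finRotate (j + 1)) x y
  have hz' : IsSimplex G (Fin.snoc (x ∘ finRotate (j + 1)) y : Fin (j + 2) → V) :=
    hτ ▸ (isSimplex_comp_perm τ).2 hz
  set z : Fin (j + 2) → V := Fin.snoc x y
  set z' : Fin (j + 2) → V := Fin.snoc (x ∘ finRotate (j + 1)) y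
  have hΔ : ((χ (x 0) - χ y : ℝ) : ℂ) * 2 =
      -(((j + 1 : ℕ) : ℂ) * (dOn G Λ j (avg χ) z + dOn G Λ j (avg χ) z')) := by
    rw [mul_add, dOn_avg_of_even χ hj hz (snoc_mem_tuplesIn.2 ⟨hxΛ, hy⟩),
      dOn_avg_of_even χ hj hz'
        (snoc_mem_tuplesIn.2 ⟨(comp_perm_mem_tuplesIn _).2 hxΛ, hy⟩),
      ← neg_add, alternating_sum_add_rotate (fun v => (χ v : ℂ)) hj]
    push_cast
    ring
  have htwo : (1 : ℝ≥0∞) ≤ ‖(2 : ℂ)‖ₑ := by simp [← ofReal_norm]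
  have hcast : ‖((j + 1 : ℕ) : ℂ)‖ₑ = ((j + 1 : ℕ) : ℝ≥0∞) := by
    rw [← ofReal_norm, Complex.norm_natCast, ENNReal.ofReal_natCast]
  calc ‖χ (x 0) - χ y‖ₑ ^ 2
      ≤ ‖((χ (x 0) - χ y : ℝ) : ℂ) * 2‖ₑ ^ 2 := by
        rw [enorm_mul, enorm_complex_ofReal]
        gcongr
        exact le_mul_of_one_le_right' htwo
    _ ≤ (((j + 1 : ℕ) : ℝ≥0∞) * (‖dOn G Λ j (avg χ) z‖ₑ + ‖dOn G Λ j (avg χ) z'‖ₑ)) ^ 2 := by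
        rw [hΔ, enorm_neg, enorm_mul, hcast]
        gcongr
        exact enorm_add_le _ _
    _ ≤ _ := by
        rw [mul_pow, mul_comm 2, mul_assoc]
        gcongr
        exact ennreal_add_sq_le _ _

theorem tsum_coface_sub_le_of_even {χ : V → ℝ} {C : ℝ} (hj : j + 1 ≤ n) (hje : Even j)
    (h : ∀ x : Fin (j + 1) → V, IsSimplex G x → x ∈ tuplesIn Λ (j + 1) →
      gradEnergyOn W Λ j χ x ≤ C)
    {x : Fin (j + 1) → V} (hx : IsSimplex G x) (hxΛ : x ∈ tuplesIn Λ (j + 1)) :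
    ∑' y : Λ, ENNReal.ofReal (W.m (j + 1) (Fin.snoc x y.1)) * ‖χ (x 0) - χ y‖ₑ ^ 2 ≤
      4 * ((j + 1 : ℕ) : ℝ≥0∞) ^ 2 * ENNReal.ofReal C * ENNReal.ofReal (W.m j x) := by
  set r := finRotate (j + 1)
  have hterm : ∀ y : Λ, ENNReal.ofReal (W.m (j + 1) (Fin.snoc x y.1)) * ‖χ (x 0) - χ y‖ₑ ^ 2 ≤
      2 * ((j + 1 : ℕ) : ℝ≥0∞) ^ 2 *
        (ENNReal.ofReal (W.m (j + 1) (Fin.snoc x y.1)) *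
          ‖dOn G Λ j (avg χ) (Fin.snoc x y.1)‖ₑ ^ 2 +
        ENNReal.ofReal (W.m (j + 1) (Fin.snoc (x ∘ r) y.1)) *
          ‖dOn G Λ j (avg χ) (Fin.snoc (x ∘ r) y.1)‖ₑ ^ 2) := fun y => by
    by_cases hz : IsSimplex G (Fin.snoc x y.1 : Fin (j + 2) → V)
    · obtain ⟨τ, hτ, -⟩ := snoc_comp_perm r x y.1
      have hm : W.m (j + 1) (Fin.snoc (x ∘ r) y.1) = W.m (j + 1) (Fin.snoc x y.1) := by
        rw [hτ, W.m_comp_perm hj]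
      rw [hm, ← mul_add, mul_left_comm]
      gcongr
      exact enorm_sub_sq_le_dOn_avg χ hje hz hxΛ y.2
    · simp [W.m_eq_zero hj hz]
  have hgrad := tsum_coface_dOn_avg_le hj hx (h x hx hxΛ)
  have hgrad' := tsum_coface_dOn_avg_le hj ((isSimplex_comp_perm r).2 hx)
    (h (x ∘ r) ((isSimplex_comp_perm r).2 hx) ((comp_perm_mem_tuplesIn r).2 hxΛ))
  rw [W.m_comp_perm (j.le_succ.trans hj)] at hgrad'
  refine (ENNReal.tsum_le_tsum hterm).trans ?_
  rw [ENNReal.tsum_mul_left, ENNReal.tsum_add]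
  refine (mul_le_mul_right (add_le_add hgrad hgrad') _).trans_eq ?_
  ring

/-- In odd degree the gradient of the constant function `1` is `1`, so the gradient bound for a
large plateau controls the total weight of the cofaces over `Λ`. -/
theorem tsum_coface_le_of_odd {O : ℕ → Set V} {χ : ℕ → V → ℝ} {C : ℝ}
    (hO : ∀ v ∈ Λ, ∀ᶠ k in atTop, v ∈ O k) (hj : j + 1 ≤ n) (hjo : ¬ Even j)
    (hone : ∀ k, ∀ x : Fin (j + 1) → V, IsSimplex G x → x ∈ tuplesIn Λ (j + 1) →
      x ∈ tuplesIn (O k) (j + 1) → avg (χ k) x = 1)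
    {x : Fin (j + 1) → V} (hx : IsSimplex G x) (hxΛ : x ∈ tuplesIn Λ (j + 1))
    (h : ∀ k, gradEnergyOn W Λ j (χ k) x ≤ C) :
    ∑' y : Λ, ENNReal.ofReal (W.m (j + 1) (Fin.snoc x y.1)) ≤
      ENNReal.ofReal C * ENNReal.ofReal (W.m j x) := by
  have hxO : ∀ᶠ k in atTop, x ∈ tuplesIn (O k) (j + 1) := eventually_all.2 fun a => hO _ (hxΛ a)
  have hyO : ∀ᶠ k in atTop, ∀ y ∈ {y | W.m (j + 1) (Fin.snoc x y) ≠ 0}, y ∈ Λ → y ∈ O k :=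
    (W.finite_m_snoc_ne_zero hj x).eventually_all.2 fun y _ => by
      by_cases hy : y ∈ Λ
      · exact (hO y hy).mono fun k hk _ => hk
      · exact .of_forall fun k hyΛ => absurd hyΛ hy
  obtain ⟨k, hxk, hyk⟩ := (hxO.and hyO).exists
  refine le_trans (ENNReal.tsum_le_tsum fun y => ?_) (tsum_coface_dOn_avg_le hj hx (h k))
  by_cases hm : W.m (j + 1) (Fin.snoc x y.1) = 0
  · simp [hm]
  have hz : IsSimplex G (Fin.snoc x y.1 : Fin (j + 2) → V) := by
    by_contra hz
    exact hm (W.m_eq_zero hj hz)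
  have hzΛ := snoc_mem_tuplesIn.2 ⟨hxΛ, y.2⟩
  have hzO := snoc_mem_tuplesIn.2 ⟨hxk, hyk y hm y.2⟩
  have hd : dOn G Λ j (avg (χ k)) (Fin.snoc x y.1) = 1 := by
    rw [dOn_apply _ hz hzΛ, Finset.sum_congr rfl fun a _ => by
      rw [hone k _ (hz.comp_injective Fin.succAbove_right_injective) (fun b => hzΛ _)
        (fun b => hzO _), mul_one], sum_neg_one_pow_fin, if_neg (by grind)]
  simp [hd]

/-- A cut-off sequence over `Λ` whose differences across cofaces, rather than the gradients of its
averages, are controlled in every degree. -/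
structure IsCutoffSeq (W : CliqueWeights G n) (Λ : Set V) (χ : ℕ → V → ℝ) (K : ℝ≥0∞) : Prop where
  mem_Icc : ∀ k v, χ k v ∈ Set.Icc 0 1
  finite_support : ∀ k, (χ k).support.Finite
  eventually_eq_one : ∀ v ∈ Λ, ∀ᶠ k in atTop, χ k v = 1
  tsum_coface_sub_le : ∀ k {i}, i + 1 ≤ n → ∀ x ∈ tuplesIn Λ (i + 1),
    ∑' y : Λ, ENNReal.ofReal (W.m (i + 1) (Fin.snoc x y.1)) * ‖χ k (x 0) - χ k y‖ₑ ^ 2 ≤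
      K * ENNReal.ofReal (W.m i x)

theorem IsChiWitnessOn.eventually_mem {O : ℕ → Set V} {χ : ℕ → V → ℝ}
    (h : IsChiWitnessOn W Λ O χ) : ∀ v ∈ Λ, ∀ᶠ k in atTop, v ∈ O k := by
  obtain ⟨-, hmono, -, hunion, -⟩ := h
  intro v hv
  obtain ⟨k, hk⟩ := Set.mem_iUnion.1 (hunion ▸ hv)
  exact (eventually_ge_atTop k).mono fun l hl => hmono hl hk

theorem IsChiWitnessOn.eq_one {O : ℕ → Set V} {χ : ℕ → V → ℝ} (h : IsChiWitnessOn W Λ O χ)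
    {k : ℕ} {v : V} (hv : v ∈ Λ) (hvk : v ∈ O k) : χ k v = 1 := by
  obtain ⟨-, -, -, -, -, hone, -⟩ := h
  simpa [avg] using hone k 0 n.zero_le (fun _ => v) (isSimplex_one G _) (fun _ => hv) fun _ => hvk

theorem enorm_projIcc_sub_le (a b : ℝ) :
    ‖(Set.projIcc 0 1 zero_le_one a : ℝ) - Set.projIcc 0 1 zero_le_one b‖ₑ ≤ ‖a - b‖ₑ :=
  enorm_le_iff_norm_le.2 (Set.abs_projIcc_sub_projIcc zero_le_one)

theorem enorm_sub_le_one {a b : ℝ} (ha : a ∈ Set.Icc 0 1) (hb : b ∈ Set.Icc 0 1) :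
    ‖a - b‖ₑ ≤ 1 := by
  rw [← ofReal_norm, ENNReal.ofReal_le_one]
  exact abs_sub_le_iff.2 ⟨by linarith [ha.2, hb.1], by linarith [ha.1, hb.2]⟩

theorem GloballyChiCompleteOn.exists_isCutoffSeq (h : GloballyChiCompleteOn W Λ) :
    ∃ χ K, K ≠ ⊤ ∧ IsCutoffSeq W Λ χ K := by
  obtain ⟨O, χ, hχ⟩ := h
  have ⟨_, _, _, _, hsupp, hone, C, _, hgrad⟩ := hχ
  let p (a : ℝ) : ℝ := Set.projIcc 0 1 zero_le_one a
  have hp01 : ∀ a, p a ∈ Set.Icc 0 1 := fun a => Subtype.coe_prop _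
  refine ⟨fun k v => p (χ k v), 4 * ((n + 1 : ℕ) : ℝ≥0∞) ^ 2 * ENNReal.ofReal C, by finiteness,
    fun k v => hp01 _, fun k => (hsupp k).subset fun v hv hv0 => hv ?_,
    fun v hv => (hχ.eventually_mem v hv).mono fun k hk => ?_, fun k i hi x hxΛ => ?_⟩
  · simp [p, hv0]
  · simp [p, hχ.eq_one hv hk]
  by_cases hx : IsSimplex G x
  · by_cases hie : Even i
    · refine le_trans (ENNReal.tsum_le_tsum fun y => ?_)
        ((tsum_coface_sub_le_of_even hi hie (hgrad k i hi) hx hxΛ).trans ?_)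
      · gcongr
        exact enorm_projIcc_sub_le _ _
      · gcongr
        exact i.le_succ.trans hi
    · refine le_trans (ENNReal.tsum_le_tsum fun y => ?_) ((tsum_coface_le_of_odd
        hχ.eventually_mem hi hie (fun k => hone k i (i.le_succ.trans hi)) hx hxΛ
        fun k => hgrad k i hi x hx hxΛ).trans ?_)
      · exact mul_le_of_le_one_right' (pow_le_one' (enorm_sub_le_one (hp01 _) (hp01 _)) 2)
      · gcongr
        refine le_mul_of_one_le_left' (one_le_mul (by norm_num) (one_le_pow₀ ?_))
        exact_mod_cast n.succ_pos
  · have hz : ∀ y, ¬ IsSimplex G (Fin.snoc x y : Fin (i + 2) → V) := fun y hy => hx <| by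
      simpa [comp_def] using hy.comp_injective (Fin.castSucc_injective _)
    simp [W.m_eq_zero hi (hz _)]

end cutoffs

/-! ### Commutators with the cut-off functions -/

/-- Extension of a vertex function to tuples by the minimum over the vertices. In contrast to the
average `avg`, appending a vertex `y` to `x` changes it by at most `|χ (x 0) - χ y|`. -/
noncomputable def minExt (χ : V → ℝ) {k : ℕ} (x : Fin k → V) : ℝ := ⨅ j, χ (x j)

/-- Multiplication of a function on tuples by the simplicial cut-off `minExt χ`. -/
noncomputable def cutoffMul (χ : V → ℝ) {k : ℕ} (f : (Fin k → V) → ℂ) : (Fin k → V) → ℂ :=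
  (fun x => (minExt χ x : ℂ)) * f

section minExt

variable (χ : V → ℝ) {i k : ℕ}

theorem minExt_le (x : Fin k → V) (j : Fin k) : minExt χ x ≤ χ (x j) :=
  ciInf_le (Set.finite_range _).bddBelow j

theorem exists_minExt_eq (x : Fin (i + 1) → V) : ∃ j, χ (x j) = minExt χ x :=
  exists_eq_ciInf_of_finite

theorem minExt_comp_perm (x : Fin k → V) (σ : Equiv.Perm (Fin k)) :
    minExt χ (x ∘ σ) = minExt χ x :=
  σ.iInf_comp (g := fun j => χ (x j))

theorem minExt_snoc (x : Fin (i + 1) → V) (y : V) :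
    minExt χ (Fin.snoc x y : Fin (i + 2) → V) = min (minExt χ x) (χ y) := by
  refine le_antisymm (le_min (le_ciInf fun j => ?_) ?_) (le_ciInf fun j => ?_)
  · simpa using minExt_le χ (Fin.snoc x y : Fin (i + 2) → V) j.castSucc
  · simpa using minExt_le χ (Fin.snoc x y : Fin (i + 2) → V) (Fin.last _)
  · refine j.lastCases ?_ fun j => ?_
    · simp
    · simpa using .inl (minExt_le χ x j)

theorem enorm_minExt_sub_snoc_le (x : Fin (i + 1) → V) (y : V) :
    ‖minExt χ x - minExt χ (Fin.snoc x y : Fin (i + 2) → V)‖ₑ ≤ ‖χ (x 0) - χ y‖ₑ := by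
  rw [enorm_le_iff_norm_le, minExt_snoc]
  rcases le_total (minExt χ x) (χ y) with hy | hy
  · simp [hy]
  · rw [min_eq_right hy]
    have h0 := minExt_le χ x 0
    exact abs_le_abs_of_nonneg (by linarith) (by linarith)

variable {χ}

theorem minExt_mem_Icc (hχ : ∀ v, χ v ∈ Set.Icc 0 1) (x : Fin (i + 1) → V) :
    minExt χ x ∈ Set.Icc 0 1 := by
  obtain ⟨j, hj⟩ := exists_minExt_eq χ x
  exact hj ▸ hχ _

theorem cutoffMul_apply (f : (Fin k → V) → ℂ) (x : Fin k → V) :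
    cutoffMul χ f x = (minExt χ x : ℂ) * f x := rfl

theorem finite_support_cutoffMul (hχ : ∀ v, χ v ∈ Set.Icc 0 1) (hfin : χ.support.Finite)
    (f : (Fin (i + 1) → V) → ℂ) : (cutoffMul χ f).support.Finite := by
  refine (finite_tuplesIn hfin (i + 1)).subset fun x hx j hj => hx ?_
  have hmin : minExt χ x = 0 :=
    ((minExt_le χ x j).trans_eq hj).antisymm (minExt_mem_Icc hχ x).1
  simp [cutoffMul_apply, hmin]

theorem cutoffMul_zero : cutoffMul χ (0 : (Fin k → V) → ℂ) = 0 := mul_zero _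

theorem cutoffMul_add (f g : (Fin k → V) → ℂ) :
    cutoffMul χ (f + g) = cutoffMul χ f + cutoffMul χ g := mul_add _ _ _

theorem indicator_cutoffMul (S : Set (Fin k → V)) (f : (Fin k → V) → ℂ) :
    S.indicator (cutoffMul χ f) = cutoffMul χ (S.indicator f) :=
  funext fun x => Set.indicator_mul_right (i := x) S (fun x => (minExt χ x : ℂ)) f

theorem IsCochain.cutoffMul {G : WG V} {f : (Fin (i + 1) → V) → ℂ} (hf : IsCochain G i f) :
    IsCochain G i (cutoffMul χ f) :=
  hf.mul_of_invariant fun x σ => by rw [minExt_comp_perm]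

end minExt

section commutators

variable {G : WG V} {n i : ℕ} {Λ : Set V}

/-- The energy density at `x` of the gradient of `minExt χ` over `Λ`. -/
noncomputable def minExtGrad (W : CliqueWeights G n) (Λ : Set V) (χ : V → ℝ)
    (x : Fin (i + 1) → V) : ℝ≥0∞ :=
  ∑' y : Λ, ENNReal.ofReal (W.m (i + 1) (Fin.snoc x y.1)) *
    ‖minExt χ x - minExt χ (Fin.snoc x y.1 : Fin (i + 2) → V)‖ₑ ^ 2

/-- The commutator `[d, χ]` of the coboundary with the cut-off `minExt χ`. -/
noncomputable def commD (G : WG V) (χ : V → ℝ) (f : (Fin (i + 1) → V) → ℂ) :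
    (Fin (i + 2) → V) → ℂ :=
  d G i (cutoffMul χ f) - cutoffMul χ (d G i f)

/-- The commutator `[δ, χ]` of the codifferential with the cut-off `minExt χ`. -/
noncomputable def commDelta (W : CliqueWeights G n) (χ : V → ℝ) (g : (Fin (i + 2) → V) → ℂ) :
    (Fin (i + 1) → V) → ℂ :=
  delta G W i (cutoffMul χ g) - cutoffMul χ (delta G W i g)

variable {W : CliqueWeights G n}

theorem faceEquiv_mem_tuplesIn {k : ℕ} {p : Fin (k + 1)} {z : (Fin k → V) × V} :
    faceEquiv p z ∈ tuplesIn Λ (k + 1) ↔ z.1 ∈ tuplesIn Λ k ∧ z.2 ∈ Λ := by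
  obtain ⟨σ, hσ, -⟩ := faceEquiv_eq_snoc_comp_perm p z
  rw [hσ, comp_perm_mem_tuplesIn, snoc_mem_tuplesIn]

theorem minExt_faceEquiv (χ : V → ℝ) {k : ℕ} (p : Fin (k + 1)) (z : (Fin k → V) × V) :
    minExt χ (faceEquiv p z) = minExt χ (Fin.snoc z.1 z.2 : Fin (k + 1) → V) := by
  obtain ⟨σ, hσ, -⟩ := faceEquiv_eq_snoc_comp_perm p z
  rw [hσ, minExt_comp_perm]

theorem tsum_faceEquiv {k : ℕ} (p : Fin (k + 1)) (F : (Fin (k + 1) → V) → ℝ≥0∞) :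
    ∑' z, F z = ∑' (x : Fin k → V) (y : V), F (faceEquiv p (x, y)) := by
  rw [← (faceEquiv p).tsum_eq, ENNReal.tsum_prod']

theorem enorm_commD_sq_le (χ : V → ℝ) (f : (Fin (i + 1) → V) → ℂ) {z : Fin (i + 2) → V}
    (hz : IsSimplex G z) :
    ‖commD G χ f z‖ₑ ^ 2 ≤ ((i + 2 : ℕ) : ℝ≥0∞) * ∑ p : Fin (i + 2),
      ‖minExt χ (z ∘ p.succAbove) - minExt χ z‖ₑ ^ 2 * ‖f (z ∘ p.succAbove)‖ₑ ^ 2 := by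
  have hcomm : commD G χ f z = ∑ p : Fin (i + 2), (-1 : ℂ) ^ (p : ℕ) *
      (((minExt χ (z ∘ p.succAbove) - minExt χ z : ℝ) : ℂ) * f (z ∘ p.succAbove)) := by
    simp only [commD, cutoffMul_apply, Pi.sub_apply, d_apply G _ hz, Finset.mul_sum,
      ← Finset.sum_sub_distrib]
    refine Finset.sum_congr rfl fun p _ => ?_
    push_cast
    ring
  have hle : ‖commD G χ f z‖ₑ ≤ ∑ p : Fin (i + 2),
      ‖minExt χ (z ∘ p.succAbove) - minExt χ z‖ₑ * ‖f (z ∘ p.succAbove)‖ₑ := by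
    rw [hcomm]
    refine (enorm_sum_le _ _).trans_eq (Finset.sum_congr rfl fun p _ => ?_)
    rw [enorm_mul, enorm_mul, enorm_complex_ofReal, enorm_pow, enorm_neg, enorm_one, one_pow,
      one_mul]
  refine (pow_le_pow_left' hle 2).trans ((ennreal_sum_sq_le_card_mul_sum_sq _).trans_eq ?_)
  simp only [Fintype.card_fin, mul_pow]

theorem tsum_face_le_minExtGrad (χ : V → ℝ) (hi : i + 1 ≤ n) (f : (Fin (i + 1) → V) → ℂ)
    (p : Fin (i + 2)) :
    ∑' z, (tuplesIn Λ (i + 2)).indicator (fun z => ENNReal.ofReal (W.m (i + 1) z) *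
      (‖minExt χ (z ∘ p.succAbove) - minExt χ z‖ₑ ^ 2 * ‖f (z ∘ p.succAbove)‖ₑ ^ 2)) z ≤
      ∑' x, minExtGrad W Λ χ x * ‖f x‖ₑ ^ 2 := by
  rw [tsum_faceEquiv p]
  refine ENNReal.tsum_le_tsum fun x => ?_
  rw [minExtGrad, tsum_subtype Λ fun y => ENNReal.ofReal (W.m (i + 1) (Fin.snoc x y)) *
    ‖minExt χ x - minExt χ (Fin.snoc x y : Fin (i + 2) → V)‖ₑ ^ 2, ← ENNReal.tsum_mul_right]
  refine ENNReal.tsum_le_tsum fun y => ?_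
  by_cases hz : faceEquiv p (x, y) ∈ tuplesIn Λ (i + 2)
  · rw [Set.indicator_of_mem hz, Set.indicator_of_mem (faceEquiv_mem_tuplesIn.1 hz).2,
      m_faceEquiv W hi, minExt_faceEquiv, faceEquiv_comp_succAbove, mul_assoc]
  · rw [Set.indicator_of_notMem hz]
    exact zero_le

theorem energy_indicator_commD_le (χ : V → ℝ) (hi : i + 1 ≤ n) (f : (Fin (i + 1) → V) → ℂ) :
    energy W (i + 1) ((tuplesIn Λ (i + 2)).indicator (commD G χ f)) ≤
      ((Nat.factorial (i + 2) : ℕ) : ℝ≥0∞)⁻¹ * ((i + 2 : ℕ) : ℝ≥0∞) ^ 2 *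
        ∑' x, minExtGrad W Λ χ x * ‖f x‖ₑ ^ 2 := by
  let T (p : Fin (i + 2)) (z : Fin (i + 2) → V) : ℝ≥0∞ :=
    (tuplesIn Λ (i + 2)).indicator (fun z => ENNReal.ofReal (W.m (i + 1) z) *
      (‖minExt χ (z ∘ p.succAbove) - minExt χ z‖ₑ ^ 2 * ‖f (z ∘ p.succAbove)‖ₑ ^ 2)) z
  have hterm : ∀ z, ENNReal.ofReal (W.m (i + 1) z) *
      ‖(tuplesIn Λ (i + 2)).indicator (commD G χ f) z‖ₑ ^ 2 ≤
        ((i + 2 : ℕ) : ℝ≥0∞) * ∑ p, T p z := fun z => by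
    by_cases hzΛ : z ∈ tuplesIn Λ (i + 2)
    · by_cases hz : IsSimplex G z
      · simp only [T, Set.indicator_of_mem hzΛ, ← Finset.mul_sum]
        rw [mul_left_comm]
        gcongr
        exact enorm_commD_sq_le χ f hz
      · simp [W.m_eq_zero hi hz]
    · simp [hzΛ]
  rw [energy, mul_assoc]
  refine mul_le_mul_right ?_ _
  calc ∑' z, ENNReal.ofReal (W.m (i + 1) z) *
        ‖(tuplesIn Λ (i + 2)).indicator (commD G χ f) z‖ₑ ^ 2
      ≤ ((i + 2 : ℕ) : ℝ≥0∞) * ∑ p : Fin (i + 2), ∑' z, T p z := by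
        rw [← Summable.tsum_finsetSum fun _ _ => ENNReal.summable, ← ENNReal.tsum_mul_left]
        exact ENNReal.tsum_le_tsum hterm
    _ ≤ ((i + 2 : ℕ) : ℝ≥0∞) * ∑ _p : Fin (i + 2), ∑' x, minExtGrad W Λ χ x * ‖f x‖ₑ ^ 2 := by
        gcongr with p
        exact tsum_face_le_minExtGrad χ hi f p
    _ = _ := by
        rw [Finset.sum_const, Finset.card_univ, Fintype.card_fin, nsmul_eq_mul, ← mul_assoc,
          ← pow_two]

theorem enorm_commDelta_le (χ : V → ℝ) (hi : i + 1 ≤ n) {g : (Fin (i + 2) → V) → ℂ}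
    (hg : ∀ z ∉ tuplesIn Λ (i + 2), g z = 0) (x : Fin (i + 1) → V) :
    ‖commDelta W χ g x‖ₑ ≤ ‖(W.m i x : ℂ)⁻¹‖ₑ * ∑' y : Λ,
      ENNReal.ofReal (W.m (i + 1) (Fin.snoc x y.1)) *
        (‖minExt χ x - minExt χ (Fin.snoc x y.1 : Fin (i + 2) → V)‖ₑ * ‖g (Fin.snoc x y.1)‖ₑ) := by
  let F (y : V) : ℂ := (W.m (i + 1) (Fin.snoc x y) : ℂ) *
    (((minExt χ (Fin.snoc x y : Fin (i + 2) → V) - minExt χ x : ℝ) : ℂ) * g (Fin.snoc x y))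
  have hcomm : commDelta W χ g x = (W.m i x : ℂ)⁻¹ * ∑' y, F y := by
    rw [commDelta, Pi.sub_apply, cutoffMul_apply (delta G W i g), delta_apply, delta_apply,
      mul_left_comm (minExt χ x : ℂ), ← mul_sub, ← tsum_mul_left (a := (minExt χ x : ℂ)),
      ← (summable_delta W hi (cutoffMul χ g) x).tsum_sub ((summable_delta W hi g x).mul_left _)]
    refine congrArg _ (tsum_congr fun y => ?_)
    simp only [cutoffMul_apply, F]
    push_cast
    ring
  have hF : ∀ y ∉ Λ, F y = 0 := fun y hy => by
    simp [F, hg _ fun hz => hy (snoc_mem_tuplesIn.1 hz).2]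
  rw [hcomm, enorm_mul, ← tsum_subtype_eq_of_support_subset fun y hy => by_contra (hy ∘ hF y)]
  refine mul_le_mul_right (enorm_tsum_le_tsum_enorm.trans_eq (tsum_congr fun y => ?_)) _
  rw [enorm_mul, enorm_mul, enorm_complex_ofReal, enorm_complex_ofReal,
    Real.enorm_of_nonneg (W.nonneg _ _), enorm_sub_rev]

theorem enorm_commDelta_sq_le (χ : V → ℝ) (hi : i + 1 ≤ n) {g : (Fin (i + 2) → V) → ℂ}
    (hg : ∀ z ∉ tuplesIn Λ (i + 2), g z = 0) (x : Fin (i + 1) → V) :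
    ENNReal.ofReal (W.m i x) * ‖commDelta W χ g x‖ₑ ^ 2 ≤
      (ENNReal.ofReal (W.m i x))⁻¹ * (minExtGrad W Λ χ x *
        ∑' y, ENNReal.ofReal (W.m (i + 1) (Fin.snoc x y)) * ‖g (Fin.snoc x y)‖ₑ ^ 2) := by
  rcases (W.nonneg i x).eq_or_lt with hm | hm
  · simp [← hm]
  have hm0 : ENNReal.ofReal (W.m i x) ≠ 0 := (ENNReal.ofReal_pos.2 hm).ne'
  have hinv : ‖(W.m i x : ℂ)⁻¹‖ₑ = (ENNReal.ofReal (W.m i x))⁻¹ := by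
    rw [enorm_inv (by exact_mod_cast hm.ne'), enorm_complex_ofReal, Real.enorm_of_nonneg hm.le]
  have hCS := ennreal_tsum_sq_le_tsum_mul_tsum (T := Λ)
    (r := fun y => ENNReal.ofReal (W.m (i + 1) (Fin.snoc x y.1)) *
      (‖minExt χ x - minExt χ (Fin.snoc x y.1 : Fin (i + 2) → V)‖ₑ * ‖g (Fin.snoc x y.1)‖ₑ))
    (f := fun y => ENNReal.ofReal (W.m (i + 1) (Fin.snoc x y.1)) *
      ‖minExt χ x - minExt χ (Fin.snoc x y.1 : Fin (i + 2) → V)‖ₑ ^ 2)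
    (g := fun y => ENNReal.ofReal (W.m (i + 1) (Fin.snoc x y.1)) * ‖g (Fin.snoc x y.1)‖ₑ ^ 2)
    fun y => by ring_nf; rfl
  have hle := enorm_commDelta_le (W := W) χ hi hg x
  rw [hinv] at hle
  refine (mul_le_mul_right ((pow_le_pow_left' hle 2).trans_eq (mul_pow _ _ 2)) _).trans ?_
  rw [pow_two (_⁻¹), mul_assoc, ENNReal.mul_inv_cancel_left hm0 ENNReal.ofReal_ne_top]
  gcongr
  refine hCS.trans (mul_le_mul_right ?_ _)
  exact ENNReal.tsum_comp_le_tsum_of_injective Subtype.val_injective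
    fun y => ENNReal.ofReal (W.m (i + 1) (Fin.snoc x y)) * ‖g (Fin.snoc x y)‖ₑ ^ 2

end commutators

/-! ### The inner block -/

section innerBlock

variable {G : WG V} {n i : ℕ} {W : CliqueWeights G n} {Λ : Set V} {χ : ℕ → V → ℝ} {K : ℝ≥0∞}

theorem faceEquiv_last {k : ℕ} (x : Fin k → V) (y : V) :
    faceEquiv (Fin.last k) (x, y) = (Fin.snoc x y : Fin (k + 1) → V) :=
  Fin.insertNth_last' y x

theorem IsCutoffSeq.minExtGrad_le (h : IsCutoffSeq W Λ χ K) (hi : i + 1 ≤ n) (k : ℕ)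
    {x : Fin (i + 1) → V} (hx : x ∈ tuplesIn Λ (i + 1)) :
    minExtGrad W Λ (χ k) x ≤ K * ENNReal.ofReal (W.m i x) := by
  refine le_trans (ENNReal.tsum_le_tsum fun y => ?_) (h.tsum_coface_sub_le k hi x hx)
  gcongr
  exact enorm_minExt_sub_snoc_le _ _ _

theorem IsCutoffSeq.eventually_minExt_eq_one (h : IsCutoffSeq W Λ χ K) {x : Fin (i + 1) → V}
    (hx : x ∈ tuplesIn Λ (i + 1)) : ∀ᶠ k in atTop, minExt (χ k) x = 1 := by
  filter_upwards [eventually_all.2 fun j => h.eventually_eq_one _ (hx j)] with k hk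
  simp [minExt, hk]

theorem IsCutoffSeq.eventually_minExtGrad_eq_zero (h : IsCutoffSeq W Λ χ K) (hi : i + 1 ≤ n)
    {x : Fin (i + 1) → V} (hx : x ∈ tuplesIn Λ (i + 1)) :
    ∀ᶠ k in atTop, minExtGrad W Λ (χ k) x = 0 := by
  have hsnoc : ∀ᶠ k in atTop, ∀ y ∈ {y | W.m (i + 1) (Fin.snoc x y) ≠ 0}, y ∈ Λ →
      minExt (χ k) (Fin.snoc x y : Fin (i + 2) → V) = 1 :=
    (eventually_all_finite (W.finite_m_snoc_ne_zero hi x)).2 fun y _ =>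
      eventually_imp_distrib_left.2 fun hy =>
        h.eventually_minExt_eq_one (snoc_mem_tuplesIn.2 ⟨hx, hy⟩)
  filter_upwards [h.eventually_minExt_eq_one hx, hsnoc] with k hxk hsnoc_k
  refine ENNReal.tsum_eq_zero.2 fun y => ?_
  by_cases hm : W.m (i + 1) (Fin.snoc x y.1) = 0
  · simp [hm]
  · simp [hxk, hsnoc_k y hm y.2]

theorem energyTendsto_of_dominated {u : ℕ → (Fin (i + 1) → V) → ℂ} {f : (Fin (i + 1) → V) → ℂ}
    {b : (Fin (i + 1) → V) → ℝ≥0∞} (hb : ∑' x, b x ≠ ⊤)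
    (hle : ∀ k x, ENNReal.ofReal (W.m i x) * ‖u k x - f x‖ₑ ^ 2 ≤ b x)
    (h0 : ∀ x, ∀ᶠ k in atTop, ENNReal.ofReal (W.m i x) * ‖u k x - f x‖ₑ ^ 2 = 0) :
    EnergyTendsto W i u f :=
  tendsto_ennreal_zero_of_le_mul (inv_factorial_ne_top _)
    (tendsto_ennreal_tsum_zero_of_dominated hb hle h0) fun _ => le_rfl

theorem IsCutoffSeq.energyTendsto_cutoffMul (h : IsCutoffSeq W Λ χ K)
    {f : (Fin (i + 1) → V) → ℂ} (hf : ∀ x ∉ tuplesIn Λ (i + 1), f x = 0)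
    (hE : energy W i f ≠ ⊤) : EnergyTendsto W i (fun k => cutoffMul (χ k) f) f := by
  have hsub : ∀ k x, ‖cutoffMul (χ k) f x - f x‖ₑ = ‖minExt (χ k) x - 1‖ₑ * ‖f x‖ₑ :=
    fun k x => by
      rw [cutoffMul_apply, ← sub_one_mul, enorm_mul, ← enorm_complex_ofReal]
      push_cast
      rfl
  have hone : ∀ k (x : Fin (i + 1) → V), ‖minExt (χ k) x - 1‖ₑ ≤ 1 := fun k x =>
    enorm_sub_le_one (minExt_mem_Icc (h.mem_Icc k) x) (Set.right_mem_Icc.2 zero_le_one)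
  refine energyTendsto_of_dominated ((energy_ne_top_iff W).1 hE) (fun k x => ?_) fun x => ?_
  · rw [hsub]
    gcongr
    exact mul_le_of_le_one_left zero_le (hone k x)
  · by_cases hx : x ∈ tuplesIn Λ (i + 1)
    · filter_upwards [h.eventually_minExt_eq_one hx] with k hk
      simp [hsub, hk]
    · simp [cutoffMul_apply, hf x hx]

theorem IsCutoffSeq.energyTendsto_commD (h : IsCutoffSeq W Λ χ K) (hK : K ≠ ⊤) (hi : i + 1 ≤ n)
    {f : (Fin (i + 1) → V) → ℂ} (hf : ∀ x ∉ tuplesIn Λ (i + 1), f x = 0)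
    (hE : energy W i f ≠ ⊤) :
    EnergyTendsto W (i + 1)
      (fun k => (tuplesIn Λ (i + 2)).indicator (commD G (χ k) f)) 0 := by
  have hgrad : Tendsto (fun k => ∑' x, minExtGrad W Λ (χ k) x * ‖f x‖ₑ ^ 2) atTop (𝓝 0) := by
    refine tendsto_ennreal_tsum_zero_of_dominated
      (b := fun x => K * (ENNReal.ofReal (W.m i x) * ‖f x‖ₑ ^ 2)) ?_ (fun k x => ?_) fun x => ?_
    · rw [ENNReal.tsum_mul_left]
      exact ENNReal.mul_ne_top hK ((energy_ne_top_iff W).1 hE)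
    · by_cases hx : x ∈ tuplesIn Λ (i + 1)
      · rw [← mul_assoc]
        gcongr
        exact h.minExtGrad_le hi k hx
      · simp [hf x hx]
    · by_cases hx : x ∈ tuplesIn Λ (i + 1)
      · filter_upwards [h.eventually_minExtGrad_eq_zero hi hx] with k hk
        rw [hk, zero_mul]
      · simp [hf x hx]
  refine tendsto_ennreal_zero_of_le_mul (ENNReal.mul_ne_top (inv_factorial_ne_top (i + 2))
    (ENNReal.pow_ne_top (n := 2) (ENNReal.natCast_ne_top (i + 2)))) hgrad fun k => ?_
  rw [sub_zero]
  exact energy_indicator_commD_le (χ k) hi f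

theorem IsCutoffSeq.energyTendsto_commDelta (h : IsCutoffSeq W Λ χ K) (hK : K ≠ ⊤)
    (hi : i + 1 ≤ n) {g : (Fin (i + 2) → V) → ℂ} (hg : ∀ z ∉ tuplesIn Λ (i + 2), g z = 0)
    (hE : energy W (i + 1) g ≠ ⊤) :
    EnergyTendsto W i (fun k => (tuplesIn Λ (i + 1)).indicator (commDelta W (χ k) g)) 0 := by
  let b (x : Fin (i + 1) → V) : ℝ≥0∞ :=
    ∑' y, ENNReal.ofReal (W.m (i + 1) (Fin.snoc x y)) * ‖g (Fin.snoc x y)‖ₑ ^ 2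
  have hb : ∑' x, K * b x ≠ ⊤ := by
    rw [energy_ne_top_iff, tsum_faceEquiv (Fin.last (i + 1))] at hE
    simp only [faceEquiv_last] at hE
    rw [ENNReal.tsum_mul_left]
    exact ENNReal.mul_ne_top hK hE
  refine energyTendsto_of_dominated hb (fun k x => ?_) fun x => ?_
  all_goals by_cases hx : x ∈ tuplesIn Λ (i + 1)
  · rw [Set.indicator_of_mem hx, Pi.zero_apply, sub_zero]
    calc ENNReal.ofReal (W.m i x) * ‖commDelta W (χ k) g x‖ₑ ^ 2
        ≤ (ENNReal.ofReal (W.m i x))⁻¹ * (minExtGrad W Λ (χ k) x * b x) :=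
          enorm_commDelta_sq_le (χ k) hi hg x
      _ ≤ (ENNReal.ofReal (W.m i x))⁻¹ * (K * ENNReal.ofReal (W.m i x) * b x) := by
          gcongr
          exact h.minExtGrad_le hi k hx
      _ = (ENNReal.ofReal (W.m i x))⁻¹ * ENNReal.ofReal (W.m i x) * (K * b x) := by ring
      _ ≤ K * b x := mul_le_of_le_one_left zero_le (ENNReal.inv_mul_le_one _)
  · simp [hx]
  · filter_upwards [h.eventually_minExtGrad_eq_zero hi hx] with k hk
    rw [Set.indicator_of_mem hx, Pi.zero_apply, sub_zero, ← nonpos_iff_eq_zero]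
    simpa [hk] using enorm_commDelta_sq_le (W := W) (χ k) hi hg x
  · simp [hx]

variable {u : ∀ i : ℕ, (Fin (i + 1) → V) → ℂ}

theorem apply_eq_zero_of_projOut_eq_zero (hu : ∀ i, projOut Λ u i = 0) {x : Fin (i + 1) → V}
    (hx : x ∉ tuplesIn Λ (i + 1)) : u i x = 0 := by
  rw [← projIn_eq_self Λ hu]
  exact Set.indicator_of_notMem hx _

theorem projOut_cutoffMul (hu : ∀ i, projOut Λ u i = 0) (χ : V → ℝ) (i : ℕ) :
    projOut Λ (fun i => cutoffMul χ (u i)) i = 0 := by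
  have hi := hu i
  rw [projOut_eq_indicator_compl] at hi ⊢
  rw [indicator_cutoffMul, hi, cutoffMul_zero]

theorem Din_cutoffMul (hu : ∀ i, projOut Λ u i = 0) (χ : V → ℝ) (i : ℕ) :
    Din G W Λ (fun i => cutoffMul χ (u i)) i = cutoffMul χ (Din G W Λ u i) +
      (tuplesIn Λ (i + 1)).indicator
        (Dop G W (fun i => cutoffMul χ (u i)) i - cutoffMul χ (Dop G W u i)) := by
  rw [Din, Din, projIn_eq_self Λ hu, projIn_eq_self Λ (projOut_cutoffMul hu χ)]
  simp only [projIn]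
  rw [← indicator_cutoffMul, ← sub_eq_iff_eq_add']
  exact (Set.indicator_sub _ _ _).symm

theorem IsCutoffSeq.energyTendsto_commDelta_family (h : IsCutoffSeq W Λ χ K) (hK : K ≠ ⊤)
    (hvanish : ∀ i, n < i → u i = 0) (hu : ∀ i, projOut Λ u i = 0)
    (hE : ∀ i, energy W i (u i) ≠ ⊤) (i : ℕ) :
    EnergyTendsto W i
      (fun k => (tuplesIn Λ (i + 1)).indicator (commDelta W (χ k) (u (i + 1)))) 0 := by
  rcases le_or_gt (i + 1) n with hi | hi
  · exact h.energyTendsto_commDelta hK hi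
      (fun _ hz => apply_eq_zero_of_projOut_eq_zero hu hz) (hE _)
  · simp [EnergyTendsto, hvanish _ hi, commDelta, cutoffMul_zero, delta_zero, energy_zero]

theorem IsCutoffSeq.energyTendsto_commDop (h : IsCutoffSeq W Λ χ K) (hK : K ≠ ⊤)
    (hvanish : ∀ i, n < i → u i = 0) (hu : ∀ i, projOut Λ u i = 0)
    (hE : ∀ i, energy W i (u i) ≠ ⊤) (i : ℕ) :
    EnergyTendsto W i (fun k => (tuplesIn Λ (i + 1)).indicator
      (Dop G W (fun i => cutoffMul (χ k) (u i)) i - cutoffMul (χ k) (Dop G W u i))) 0 := by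
  have hδ := h.energyTendsto_commDelta_family hK hvanish hu hE i
  rcases i with _ | i
  · exact hδ
  rcases le_or_gt (i + 1) n with hi | hi
  · have hd := h.energyTendsto_commD hK hi
      (fun _ hx => apply_eq_zero_of_projOut_eq_zero hu hx) (hE i)
    have hsum := hd.add W hδ
    simp only [← Set.indicator_add', commD, commDelta, ← add_sub_add_comm, ← cutoffMul_add,
      add_zero] at hsum
    simpa only [Dop_succ W hi] using hsum
  · simp [EnergyTendsto, Dop_succ_of_lt W hi, cutoffMul_zero, energy_zero]

theorem esa_Din_of_globallyChiCompleteOn (h : GloballyChiCompleteOn W Λ) : ESA_Din W Λ := by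
  obtain ⟨χ, K, hK, hχ⟩ := h.exists_isCutoffSeq
  intro u hu huΛ huL hDu
  rw [memL2Family_iff] at huL hDu
  refine ⟨fun k i => cutoffMul (χ k) (u i), fun k => ⟨⟨fun i => (hu.1 i).cutoffMul, fun i hi => ?_⟩,
    fun i => finite_support_cutoffMul (hχ.mem_Icc k) (hχ.finite_support k) _,
    projOut_cutoffMul huΛ (χ k)⟩, fun i => ?_, fun i => ?_⟩
  · simp only [hu.2 i hi, cutoffMul_zero]
  · exact (hχ.energyTendsto_cutoffMul
      (fun _ hx => apply_eq_zero_of_projOut_eq_zero huΛ hx) (huL i)).tendstoL2 W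
  · have hDin := hχ.energyTendsto_cutoffMul (f := Din G W Λ u i)
      (fun _ hx => Set.indicator_of_notMem hx _) (hDu i)
    have hsum := hDin.add W (hχ.energyTendsto_commDop hK hu.2 huΛ huL i)
    rw [add_zero] at hsum
    simp only [Din_cutoffMul huΛ]
    exact hsum.tendstoL2 W

end innerBlock

theorem gaussBonnet_esa_of_region_and_compact_coupling_general
    {V : Type*} {G : WG V} {n : ℕ} {W : CliqueWeights G n} {Λ : Set V}
    (h1 : GloballyChiCompleteOn W Λ) (h2 : ESA_Dout W Λ)
    (h3bdd : ∃ M : ℝ, ∀ u : ∀ i : ℕ, (Fin (i + 1) → V) → ℂ,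
      CochainFamily G n u → FinSuppFamily u →
      normH W (Coup G W Λ u) ≤ M * normH W u) :
    ESA_D W := by
  obtain ⟨M, hM⟩ := h3bdd
  exact esa_D_of_blocks (esa_Din_of_globallyChiCompleteOn h1) h2
    (isCouplingBound_of_normH_le hM) ENNReal.ofReal_ne_top

/-- Let `Λ ⊆ V`, and decompose `H = H_in ⊕ H_out`, so that
`D = [[D_in, C], [C*, D_out]]` in block form.  Assume: (1) the restricted complex `S_n|_Λ`
is globally `χ`-complete (hence `D_in` is essentially self-adjoint); (2) `D_out` is
essentially self-adjoint on its finitely supported domain; (3) the coupling `C` extends to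
a compact (in particular bounded) operator.  Then the global Gauss–Bonnet operator `D` is
essentially self-adjoint on `⊕_{i=0}^n C_c^i(V)`. -/
theorem gaussBonnet_esa_of_region_and_compact_coupling
    {V : Type*} [Countable V] (G : WG V) {n : ℕ} (hn : 2 ≤ n) (W : CliqueWeights G n)
    (Λ : Set V)
    (h1 : GloballyChiCompleteOn W Λ)
    (h2 : ∀ u : ∀ i : ℕ, (Fin (i + 1) → V) → ℂ,
      CochainFamily G n u → (∀ i, projIn Λ u i = 0) →
      MemL2Family W u → MemL2Family W (Dout G W Λ u) →
      ∃ uk : ℕ → ∀ i : ℕ, (Fin (i + 1) → V) → ℂ,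
        (∀ k, CochainFamily G n (uk k) ∧ FinSuppFamily (uk k) ∧
          ∀ i, projIn Λ (uk k) i = 0) ∧
        TendstoL2Family W uk u ∧
        TendstoL2Family W (fun k => Dout G W Λ (uk k)) (Dout G W Λ u))
    (h3bdd : ∃ M : ℝ, 0 ≤ M ∧ ∀ u : ∀ i : ℕ, (Fin (i + 1) → V) → ℂ,
      CochainFamily G n u → FinSuppFamily u →
      normH W (Coup G W Λ u) ≤ M * normH W u)
    (h3cpt : ∀ u : ℕ → ∀ i : ℕ, (Fin (i + 1) → V) → ℂ,
      (∀ k, CochainFamily G n (u k) ∧ FinSuppFamily (u k) ∧ normH W (u k) ≤ 1) →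
      ∃ φ : ℕ → ℕ, StrictMono φ ∧
        ∀ ε : ℝ, 0 < ε → ∃ N : ℕ, ∀ a b : ℕ, N ≤ a → N ≤ b →
          normH W (fun i x => Coup G W Λ (u (φ a)) i x - Coup G W Λ (u (φ b)) i x) < ε) :
    ESA_D W := by
  obtain ⟨M, -, hM⟩ := h3bdd
  exact gaussBonnet_esa_of_region_and_compact_coupling_general h1 h2 ⟨M, hM⟩

end DiscreteHodge
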